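/- arXiv:math/0701391 — 3 statements merged into one kernel-verified Lean document; each statement's English description precedes it below -/
import Mathlib

section
/- For all real parameters (x₁, y₁, α, x₂, y₂, β), the area μ(x₁,y₁,α,x₂,y₂,β) of the convex hull of the configuration X(x₁,y₁,α,x₂,y₂,β) is at least 0.227498. -/
open Real MeasureTheory

noncomputable def pt (x y : ℝ) : EuclideanSpace ℝ (Fin 2) :=
  (WithLp.equiv 2 (Fin 2 → ℝ)).symm ![x, y]

noncomputable def sqVertex (x y a : ℝ) (k : Fin 4) : EuclideanSpace ℝ (Fin 2) :=
  pt (x + Real.sqrt 2 / 6 * Real.cos (a + ((k : ℕ) : ℝ) * (Real.pi / 2)))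
     (y + Real.sqrt 2 / 6 * Real.sin (a + ((k : ℕ) : ℝ) * (Real.pi / 2)))

noncomputable def triVertex (x y b : ℝ) (k : Fin 3) : EuclideanSpace ℝ (Fin 2) :=
  pt (x + Real.sqrt 3 / 6 * Real.cos (b + ((k : ℕ) : ℝ) * (2 * Real.pi / 3)))
     (y + Real.sqrt 3 / 6 * Real.sin (b + ((k : ℕ) : ℝ) * (2 * Real.pi / 3)))

noncomputable def config (x1 y1 a x2 y2 b : ℝ) : Set (EuclideanSpace ℝ (Fin 2)) :=
  {pt 0 0, pt 1 0} ∪ Set.range (sqVertex x1 y1 a) ∪ Set.range (triVertex x2 y2 b)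

noncomputable def area (x1 y1 a x2 y2 b : ℝ) : ℝ :=
  (volume (convexHull ℝ (config x1 y1 a x2 y2 b))).toReal

open scoped ENNReal
abbrev Pl := EuclideanSpace ℝ (Fin 2)

def crossP (A B C : Pl) : ℝ := (B 0 - A 0) * (C 1 - A 1) - (B 1 - A 1) * (C 0 - A 0)

lemma cpt_hull {s : Set Pl} (h : s.Finite) : IsCompact (convexHull ℝ s) :=
  h.isCompact_convexHull ℝ

lemma vol_para (v : Fin 2 → Pl) :
    volume (parallelepiped v) = ENNReal.ofReal |v 0 0 * v 1 1 - v 0 1 * v 1 0| := by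
  set b := EuclideanSpace.basisFun (Fin 2) ℝ with hb
  set φ : Pl →ₗ[ℝ] Pl := b.toBasis.constr ℝ v with hφ
  have h1 : parallelepiped v = φ '' parallelepiped b := by
    rw [image_parallelepiped]
    congr 1
    funext i
    have := b.toBasis.constr_basis ℝ v i
    simpa [hφ] using this.symm
  have h2 : LinearMap.det φ = v 0 0 * v 1 1 - v 0 1 * v 1 0 := by
    rw [← LinearMap.det_toMatrix b.toBasis, Matrix.det_fin_two]
    have h : ∀ i j, LinearMap.toMatrix b.toBasis b.toBasis φ i j = v j i := by
      intro i j
      rw [LinearMap.toMatrix_apply, hφ, b.toBasis.constr_basis]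
      simp [hb]
    simp only [h]; ring
  rw [h1, Measure.addHaar_image_linearMap, h2, OrthonormalBasis.volume_parallelepiped, mul_one]

lemma tri_area (A B C : Pl) :
    ENNReal.ofReal (|crossP A B C| / 2) ≤ volume (convexHull ℝ {A, B, C}) := by
  set T := convexHull ℝ ({A, B, C} : Set Pl) with hT
  have hA : A ∈ T := subset_convexHull _ _ (by simp)
  have hB : B ∈ T := subset_convexHull _ _ (by simp)
  have hC : C ∈ T := subset_convexHull _ _ (by simp)
  have hc : Convex ℝ T := convex_convexHull _ _
  have key : ∀ s t : ℝ, 0 ≤ s → 0 ≤ t → s + t ≤ 1 → A + s • (B - A) + t • (C - A) ∈ T := by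
    intro s t hs ht hst
    have : A + s • (B - A) + t • (C - A) = (1 - s - t) • A + s • B + t • C := by module
    rw [this]
    have := hc.sum_mem (t := Finset.univ) (w := ![1 - s - t, s, t]) (z := ![A, B, C])
      (by intro i _; fin_cases i <;> simp <;> linarith) (by simp [Fin.sum_univ_three]; ring)
      (by intro i _; fin_cases i <;> simp [hA, hB, hC])
    simpa [Fin.sum_univ_three] using this
  have hsub : parallelepiped ![B - A, C - A] ⊆
      (fun z => A + z) ⁻¹' T ∪ (fun z => (B + C - A) - z) ⁻¹' T := by
    intro z hz
    rw [mem_parallelepiped_iff] at hz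
    obtain ⟨t, ⟨h0, h1⟩, rfl⟩ := hz
    have h00 := h0 0
    have h01 := h0 1
    have h10 := h1 0
    have h11 := h1 1
    simp only [Pi.zero_apply, Pi.one_apply] at h00 h01 h10 h11
    by_cases h : t 0 + t 1 ≤ 1
    · left
      have := key _ _ h00 h01 h
      simpa [Fin.sum_univ_two, add_assoc] using this
    · right
      have := key (1 - t 0) (1 - t 1) (by linarith) (by linarith) (by linarith)
      have e : A + (1 - t 0) • (B - A) + (1 - t 1) • (C - A)
        = (B + C - A) - (t 0 • (B - A) + t 1 • (C - A)) := by module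
      rw [e] at this
      simpa [Fin.sum_univ_two] using this
  have hv := (measure_mono hsub).trans (measure_union_le (μ := volume) _ _)
  rw [vol_para, measure_preimage_add,
    (Measure.measurePreserving_sub_left (volume : Measure Pl) (B + C - A)).measure_preimage
      (by
        have : IsCompact T := cpt_hull (Set.toFinite _)
        exact this.measurableSet.nullMeasurableSet)] at hv
  have e : |crossP A B C| = |(![B - A, C - A] : Fin 2 → Pl) 0 0 * (![B - A, C - A] : Fin 2 → Pl) 1 1 - (![B - A, C - A] : Fin 2 → Pl) 0 1 * (![B - A, C - A] : Fin 2 → Pl) 1 0| := by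
    simp [crossP]
  rw [← e, ← two_mul] at hv
  rw [ENNReal.ofReal_div_of_pos (by norm_num), ENNReal.div_le_iff (by simp) (by simp)]
  rw [mul_comm]
  simpa using hv

lemma null_line (L : Pl →ₗ[ℝ] ℝ) (hL : L ≠ 0) (r : ℝ) : volume {z | L z = r} = 0 := by
  by_cases h : ∃ z, L z = r
  · obtain ⟨z0, h0⟩ := h
    have h1 : {z | L z = r} = (fun z => -z0 + z) ⁻¹' (LinearMap.ker L : Set Pl) := by
      ext z
      simp [h0]
      constructor <;> intro h <;> linarith
    rw [h1, measure_preimage_add]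
    apply Measure.addHaar_submodule
    rw [Ne, LinearMap.ker_eq_top]; exact hL
  · have : {z | L z = r} = ∅ := by
      ext z; simp; intro hz; exact h ⟨z, hz⟩
    simp [this]

lemma sep_tri (L : Pl →ₗ[ℝ] ℝ) (hL : L ≠ 0) (r : ℝ) {A B C D E F : Pl}
    (hA : L A ≤ r) (hB : L B ≤ r) (hC : L C ≤ r) (hD : r ≤ L D) (hE : r ≤ L E) (hF : r ≤ L F) :
    AEDisjoint volume (convexHull ℝ {A, B, C}) (convexHull ℝ {D, E, F}) := by
  refine measure_mono_null ?_ (null_line L hL r)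
  rintro z ⟨h1, h2⟩
  have a1 : convexHull ℝ {A, B, C} ⊆ {z | L z ≤ r} :=
    convexHull_min (by intro w; simp; rintro (rfl | rfl | rfl) <;> assumption)
      (convex_halfSpace_le L.isLinear r)
  have a2 : convexHull ℝ {D, E, F} ⊆ {z | r ≤ L z} :=
    convexHull_min (by intro w; simp; rintro (rfl | rfl | rfl) <;> assumption)
      (convex_halfSpace_ge L.isLinear r)
  exact le_antisymm (a1 h1) (a2 h2)

lemma sum_tri {n : ℕ} (K : Set Pl) (hK : IsCompact K) (hc : Convex ℝ K) (A B C : Fin n → Pl)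
    (hA : ∀ i, A i ∈ K) (hB : ∀ i, B i ∈ K) (hC : ∀ i, C i ∈ K)
    (hd : ∀ i j, i < j → AEDisjoint volume (convexHull ℝ {A i, B i, C i})
      (convexHull ℝ {A j, B j, C j})) :
    ∑ i, |crossP (A i) (B i) (C i)| / 2 ≤ (volume K).toReal := by
  have h1 : volume (⋃ i ∈ (Finset.univ : Finset (Fin n)), convexHull ℝ {A i, B i, C i})
      = ∑ i, volume (convexHull ℝ {A i, B i, C i}) := by
    apply measure_biUnion_finset₀
    · intro i _ j _ hij
      rcases lt_or_gt_of_ne hij with h | h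
      · exact hd i j h
      · exact (hd j i h).symm
    · intro i _
      exact (cpt_hull (Set.toFinite _)).measurableSet.nullMeasurableSet
  have h2 : (⋃ i ∈ (Finset.univ : Finset (Fin n)), convexHull ℝ {A i, B i, C i}) ⊆ K := by
    refine Set.iUnion₂_subset fun i _ => convexHull_min ?_ hc
    intro w; simp; rintro (rfl | rfl | rfl)
    exacts [hA i, hB i, hC i]
  have h3 := measure_mono (μ := volume) h2
  rw [h1] at h3
  have h4 : ENNReal.ofReal (∑ i, |crossP (A i) (B i) (C i)| / 2) ≤ volume K := by
    rw [ENNReal.ofReal_sum_of_nonneg (fun i _ => by positivity)]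
    exact (Finset.sum_le_sum fun i _ => tri_area _ _ _).trans h3
  exact (ENNReal.ofReal_le_iff_le_toReal hK.measure_lt_top.ne).1 h4

lemma corner (f g : Pl →ₗ[ℝ] ℝ) (u v : Pl) (hnd : f u * g v - g u * f v ≠ 0)
    {S T : Set Pl} {O A B r t : Pl} (hS : S = {O, A, r}) (hT : T = {O, B, t})
    (h1 : f A = f O) (h2 : g A ≤ g O) (h3 : g B = g O) (h4 : f B ≤ f O)
    (h5 : f O ≤ f r) (h6 : g O ≤ g t) (h7 : f t ≤ f r) (h8 : g r ≤ g t) :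
    AEDisjoint volume (convexHull ℝ S) (convexHull ℝ T) := by
  subst hS hT
  have hf : f ≠ 0 := by rintro rfl; simp at hnd
  have hg : g ≠ 0 := by rintro rfl; simp at hnd
  by_cases c1 : g r ≤ g O
  · exact sep_tri g hg (g O) le_rfl h2 c1 le_rfl h3.ge h6
  by_cases c2 : f t ≤ f O
  · exact (sep_tri f hf (f O) le_rfl h4 c2 le_rfl h1.ge h5).symm
  push Not at c1 c2
  set P := g t - g O
  set Q := f t - f O
  have hP : 0 < P := by simp only [P]; linarith
  have hQ : 0 < Q := by simp only [Q]; linarith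
  have hL : (P • f - Q • g) ≠ 0 := by
    intro h
    have e1 := congrArg (fun l => l u) h
    have e2 := congrArg (fun l => l v) h
    simp at e1 e2
    apply hnd
    have : P * (f u * g v - g u * f v) = 0 := by linear_combination g v * e1 - g u * e2
    rcases mul_eq_zero.1 this with h | h
    · linarith
    · exact h
  refine (sep_tri (P • f - Q • g) hL (P * f O - Q * g O) ?_ ?_ ?_ ?_ ?_ ?_).symm <;> simp
  · rw [h3]; nlinarith
  · simp only [P, Q]; nlinarith
  · rw [h1]; nlinarith
  · have : 0 ≤ (f r - f t) * P := mul_nonneg (by linarith) hP.le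
    have : 0 ≤ (g t - g r) * Q := mul_nonneg (by linarith) hQ.le
    simp only [P, Q] at *
    nlinarith

lemma box (K : Set Pl) (hK : IsCompact K) (hc : Convex ℝ K) (f g : Pl →ₗ[ℝ] ℝ)
    (hcr : ∀ A B C, crossP A B C = (f B - f A) * (g C - g A) - (g B - g A) * (f C - f A))
    (X Y α : ℝ) (hα : 0 < α) (P00 P10 P01 P11 : Pl)
    (m00 : P00 ∈ K) (m10 : P10 ∈ K) (m01 : P01 ∈ K) (m11 : P11 ∈ K)
    (f00 : f P00 = X) (f10 : f P10 = X + α) (f01 : f P01 = X) (f11 : f P11 = X + α)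
    (g00 : g P00 = Y) (g10 : g P10 = Y) (g01 : g P01 = Y + α) (g11 : g P11 = Y + α)
    (e₁ e₂ e₃ e₄ : Pl) (he₁ : e₁ ∈ K) (he₂ : e₂ ∈ K) (he₃ : e₃ ∈ K) (he₄ : e₄ ∈ K) :
    α / 2 * ((f e₁ - f e₂) + (g e₃ - g e₄)) ≤ (volume K).toReal := by
  have hne : K.Nonempty := ⟨_, m00⟩
  have cf : ContinuousOn f K := (LinearMap.continuous_of_finiteDimensional f).continuousOn
  have cg : ContinuousOn g K := (LinearMap.continuous_of_finiteDimensional g).continuousOn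
  obtain ⟨r, hr, mr⟩ := hK.exists_isMaxOn hne cf
  obtain ⟨l, hl, ml⟩ := hK.exists_isMinOn hne cf
  obtain ⟨t, ht, mt⟩ := hK.exists_isMaxOn hne cg
  obtain ⟨b, hb, mb⟩ := hK.exists_isMinOn hne cg
  replace mr : ∀ z ∈ K, f z ≤ f r := fun z hz => mr hz
  replace ml : ∀ z ∈ K, f l ≤ f z := fun z hz => ml hz
  replace mt : ∀ z ∈ K, g z ≤ g t := fun z hz => mt hz
  replace mb : ∀ z ∈ K, g b ≤ g z := fun z hz => mb hz
  have hnd : f (P10 - P00) * g (P01 - P00) - g (P10 - P00) * f (P01 - P00) ≠ 0 := by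
    simp only [map_sub, f00, f10, f01, g00, g10, g01]
    ring_nf; positivity
  have hf : f ≠ 0 := by rintro rfl; simp at hnd
  have hg : g ≠ 0 := by rintro rfl; simp at hnd
  have hfg : f - g ≠ 0 := by
    intro h
    have : f = g := sub_eq_zero.1 h
    subst this
    apply hnd; ring
  have r1 := mr _ m10
  have l1 := ml _ m00
  have t1 := mt _ m01
  have b1 := mb _ m00
  have main := sum_tri K hK hc ![P00, P00, P11, P11, P00, P00] ![P10, P11, P10, P01, P01, P10]
    ![P11, P01, r, t, l, b]
    (by intro i; fin_cases i <;> simp <;> assumption)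
    (by intro i; fin_cases i <;> simp <;> assumption)
    (by intro i; fin_cases i <;> simp <;> assumption)
    (by
      have d01 : AEDisjoint volume (convexHull ℝ {P00, P10, P11}) (convexHull ℝ {P00, P11, P01}) :=
        (sep_tri (f - g) hfg (X - Y) (by simp [*]) (by simp [*]) (by simp [*]; linarith)
          (by simp [*]) (by simp [*]; linarith) (by simp [*])).symm
      have d02 : AEDisjoint volume (convexHull ℝ {P00, P10, P11}) (convexHull ℝ {P11, P10, r}) :=
        sep_tri f hf (X + α) (by linarith) (by linarith) (by linarith) (by linarith) (by linarith)
          (by linarith)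
      have d03 : AEDisjoint volume (convexHull ℝ {P00, P10, P11}) (convexHull ℝ {P11, P01, t}) :=
        sep_tri g hg (Y + α) (by linarith) (by linarith) (by linarith) (by linarith) (by linarith)
          (by linarith)
      have d04 : AEDisjoint volume (convexHull ℝ {P00, P10, P11}) (convexHull ℝ {P00, P01, l}) :=
        (sep_tri f hf X (by linarith) (by linarith) (by linarith) (by linarith) (by linarith)
          (by linarith)).symm
      have d05 : AEDisjoint volume (convexHull ℝ {P00, P10, P11}) (convexHull ℝ {P00, P10, b}) :=
        (sep_tri g hg Y (by linarith) (by linarith) (by linarith) (by linarith) (by linarith)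
          (by linarith)).symm
      have d12 : AEDisjoint volume (convexHull ℝ {P00, P11, P01}) (convexHull ℝ {P11, P10, r}) :=
        sep_tri f hf (X + α) (by linarith) (by linarith) (by linarith) (by linarith) (by linarith)
          (by linarith)
      have d13 : AEDisjoint volume (convexHull ℝ {P00, P11, P01}) (convexHull ℝ {P11, P01, t}) :=
        sep_tri g hg (Y + α) (by linarith) (by linarith) (by linarith) (by linarith) (by linarith)
          (by linarith)
      have d14 : AEDisjoint volume (convexHull ℝ {P00, P11, P01}) (convexHull ℝ {P00, P01, l}) :=
        (sep_tri f hf X (by linarith) (by linarith) (by linarith) (by linarith) (by linarith)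
          (by linarith)).symm
      have d15 : AEDisjoint volume (convexHull ℝ {P00, P11, P01}) (convexHull ℝ {P00, P10, b}) :=
        (sep_tri g hg Y (by linarith) (by linarith) (by linarith) (by linarith) (by linarith)
          (by linarith)).symm
      have d24 : AEDisjoint volume (convexHull ℝ {P11, P10, r}) (convexHull ℝ {P00, P01, l}) :=
        (sep_tri f hf X (by linarith) (by linarith) (by linarith) (by linarith) (by linarith)
          (by linarith)).symm
      have d35 : AEDisjoint volume (convexHull ℝ {P11, P01, t}) (convexHull ℝ {P00, P10, b}) :=
        (sep_tri g hg Y (by linarith) (by linarith) (by linarith) (by linarith) (by linarith)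
          (by linarith)).symm
      have d23 : AEDisjoint volume (convexHull ℝ {P11, P10, r}) (convexHull ℝ {P11, P01, t}) :=
        corner f g _ _ hnd rfl rfl (by linarith) (by linarith) (by linarith) (by linarith)
          (by linarith) (by linarith) (mr _ ht) (mt _ hr)
      have d25 : AEDisjoint volume (convexHull ℝ {P11, P10, r}) (convexHull ℝ {P00, P10, b}) :=
        corner f (-g) (P10 - P00) (P01 - P00) (O := P10) (A := P11) (B := P00) (r := r) (t := b)
          (by
            simp only [LinearMap.neg_apply]
            intro h; apply hnd; linear_combination -h) (Set.insert_comm _ _ _)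
          (Set.insert_comm _ _ _)
          (by linarith) (by simp; linarith) (by simp; linarith) (by linarith)
          (by linarith) (by simp; linarith) (mr _ hb) (by simpa using mb _ hr)
      have d34 : AEDisjoint volume (convexHull ℝ {P11, P01, t}) (convexHull ℝ {P00, P01, l}) :=
        (corner (-f) g (P10 - P00) (P01 - P00) (O := P01) (A := P00) (B := P11) (r := l) (t := t)
          (by
            simp only [LinearMap.neg_apply]
            intro h; apply hnd; linear_combination -h) (Set.insert_comm _ _ _)
          (Set.insert_comm _ _ _)
          (by simp; linarith) (by linarith) (by linarith) (by simp; linarith)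
          (by simp; linarith) (by linarith) (by simpa using ml _ ht) (mt _ hl)).symm
      have d45 : AEDisjoint volume (convexHull ℝ {P00, P01, l}) (convexHull ℝ {P00, P10, b}) :=
        corner (-f) (-g) (P10 - P00) (P01 - P00) (O := P00) (A := P01) (B := P10) (r := l) (t := b)
          (by
            simp only [LinearMap.neg_apply]
            intro h; apply hnd; linear_combination h) rfl rfl
          (by simp; linarith) (by simp; linarith) (by simp; linarith) (by simp; linarith)
          (by simp; linarith) (by simp; linarith) (by simpa using ml _ hb) (by simpa using mb _ hl)
      intro i j hij
      fin_cases i <;> fin_cases j <;> first | (exact absurd hij (by decide)) | assumption)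
  have main2 : ∑ i : Fin 6, |crossP (![P00, P00, P11, P11, P00, P00] i)
      (![P10, P11, P10, P01, P01, P10] i) (![P11, P01, r, t, l, b] i)| / 2
      = α / 2 * ((f r - f l) + (g t - g b)) := by
    simp only [Fin.sum_univ_six, hcr]
    simp [f00, f10, f01, f11, g00, g10, g01, g11]
    rw [abs_of_pos hα, abs_of_nonneg (show (0:ℝ) ≤ f r - (X + α) by linarith),
      abs_of_nonneg (show (0:ℝ) ≤ g t - (Y + α) by linarith),
      abs_of_nonpos (show f l - X ≤ 0 by linarith),
      abs_of_nonpos (show g b - Y ≤ 0 by linarith)]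
    ring
  rw [main2] at main
  have q1 := mr _ he₁
  have q2 := ml _ he₂
  have q3 := mt _ he₃
  have q4 := mb _ he₄
  refine le_trans (mul_le_mul_of_nonneg_left ?_ (by positivity)) main
  linarith

lemma height (K : Set Pl) (hK : IsCompact K) (hc : Convex ℝ K) (hE : pt 0 0 ∈ K) (hF : pt 1 0 ∈ K)
    (p q : Pl) (hp : p ∈ K) (hq : q ∈ K) : (p 1 - q 1) / 2 ≤ (volume K).toReal := by
  set g : Pl →ₗ[ℝ] ℝ := (EuclideanSpace.proj (1 : Fin 2) : Pl →L[ℝ] ℝ).toLinearMap with hg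
  have gz : ∀ z, g z = z 1 := fun z => rfl
  have hne : K.Nonempty := ⟨_, hE⟩
  have cg : ContinuousOn g K := (LinearMap.continuous_of_finiteDimensional g).continuousOn
  obtain ⟨t, ht, mt⟩ := hK.exists_isMaxOn hne cg
  obtain ⟨b, hb, mb⟩ := hK.exists_isMinOn hne cg
  replace mt : ∀ z ∈ K, g z ≤ g t := fun z hz => mt hz
  replace mb : ∀ z ∈ K, g b ≤ g z := fun z hz => mb hz
  simp only [gz] at mt mb
  have t1 := mt _ hE
  have b1 := mb _ hE
  have e0 : (pt 0 0) 1 = 0 := by simp [pt]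
  have e1 : (pt 1 0) 1 = 0 := by simp [pt]
  have hg0 : g ≠ 0 := by
    intro h
    have := congrArg (fun l => l (pt 0 1)) h
    simp [gz, pt] at this
  have main := sum_tri K hK hc ![pt 0 0, pt 0 0] ![pt 1 0, pt 1 0] ![t, b]
    (by intro i; fin_cases i <;> simp <;> assumption)
    (by intro i; fin_cases i <;> simp <;> assumption)
    (by intro i; fin_cases i <;> simp <;> assumption)
    (by
      have d : AEDisjoint volume (convexHull ℝ {pt 0 0, pt 1 0, t})
          (convexHull ℝ {pt 0 0, pt 1 0, b}) :=
        (sep_tri g hg0 0 (by rw [gz]; linarith) (by rw [gz]; linarith) (by rw [gz]; linarith)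
          (by rw [gz]; linarith) (by rw [gz]; linarith) (by rw [gz]; linarith)).symm
      intro i j hij
      fin_cases i <;> fin_cases j <;> first | (exact absurd hij (by decide)) | assumption)
  have c0 : ∀ z : Pl, crossP (pt 0 0) (pt 1 0) z = z 1 := by
    intro z; simp [crossP, pt]
  simp [Fin.sum_univ_two, c0] at main
  rw [e0] at t1 b1
  rw [abs_of_nonneg t1, abs_of_nonpos b1] at main
  have := mt _ hp
  have := mb _ hq
  linarith

/-- The numerical heart, with all signs normalised. -/
lemma scalar_num (c s p m t : ℝ) (h1 : c ^ 2 + s ^ 2 = 1) (h2 : p ^ 2 + m ^ 2 = 1)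
    (ht : t ^ 2 = 3 / 4) (t0 : 0 ≤ t) (s0 : 0 ≤ s) (sc : s ≤ c) (p0 : 0 ≤ p) (m0 : 0 ≤ m)
    (m1 : m ≤ 1 / 2) (ha : c + s < 1.364988) (hb : m / 2 + t * p < 0.909992) :
    0 ≤ c / 2 - t * s ∧
    1.364988 ≤ c + 1 / 2 * (p * (s / 2 + t * c) - m * (c / 2 - t * s)) := by
  have tl : 0.8660254037 ≤ t := by nlinarith
  have tu : t ≤ 0.8660254038 := by nlinarith
  have hd : 0.3698753301 < c - s := by nlinarith
  have hs : s ≤ 0.49755633495 := by linarith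
  have hc : 1 - 0.2664388446 * s ≤ c := by
    by_contra hcon
    push Not at hcon
    have : 0 ≤ 1 - 0.2664388446 * s := by nlinarith
    nlinarith
  have hm4 : m ^ 2 ≤ 1 / 4 := by nlinarith
  have hpt : t ≤ p := by nlinarith
  have hw : 0 ≤ p / 2 - t * m := by nlinarith
  have hw2 : (p / 2 - t * m) ^ 2 + (m / 2 + t * p) ^ 2 = 1 := by
    linear_combination (1 / 4 + t ^ 2) * h2 + ht
  have hu0 : 0 ≤ m / 2 + t * p := by positivity
  have hw3 : 0.4146258071 < p / 2 - t * m := by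
    generalize p / 2 - t * m = w at *
    generalize m / 2 + t * p = u at *
    nlinarith
  have hmeq : m = (m / 2 + t * p) / 2 - t * (p / 2 - t * m) := by
    linear_combination (-m) * ht
  have hm : m ≤ 0.0959195181 := by
    have : 0.8660254037 * 0.4146258071 ≤ t * (p / 2 - t * m) :=
      mul_le_mul tl hw3.le (by norm_num) t0
    linarith
  have hp : 0.9953890927 ≤ p := by
    have hm2 : m ^ 2 ≤ 0.0959195181 ^ 2 := pow_le_pow_left₀ m0 hm 2
    by_contra hcon
    have hp2 : p ^ 2 < 0.9953890927 ^ 2 := pow_lt_pow_left₀ (not_le.1 hcon) p0 two_ne_zero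
    norm_num at hm2 hp2
    linarith
  have c0 : 0 ≤ c := s0.trans sc
  have hcs : 0 ≤ c / 2 - t * s := by
    have : t * s ≤ 0.8660254038 * s := mul_le_mul_of_nonneg_right tu s0
    linarith
  refine ⟨hcs, ?_⟩
  have e1 : 0.9953890927 * (s / 2 + t * c) ≤ p * (s / 2 + t * c) :=
    mul_le_mul_of_nonneg_right hp (by positivity)
  have e2 : m * (c / 2 - t * s) ≤ 0.0959195181 * (c / 2 - t * s) :=
    mul_le_mul_of_nonneg_right hm hcs
  have e3 : 0.8660254037 * c ≤ t * c := mul_le_mul_of_nonneg_right tl c0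
  have e4 : 0.8660254037 * s ≤ t * s := mul_le_mul_of_nonneg_right tl s0
  linarith

lemma two_abs {x y M : ℝ} (h1 : |-x / 2 + y| ≤ M) (h2 : |-x / 2 - y| ≤ M) :
    |x| / 2 + |y| ≤ M := by
  rw [abs_le] at h1 h2
  rcases abs_cases x with h | h <;> rcases abs_cases y with h' | h' <;> linarith

lemma scalar_core (c s C S t A : ℝ) (h1 : c ^ 2 + s ^ 2 = 1) (h2 : C ^ 2 + S ^ 2 = 1)
    (ht : t ^ 2 = 3 / 4) (t0 : 0 ≤ t) (sc : |s| ≤ |c|) (hS : |S| ≤ 1 / 2)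
    (ha : (|c| + |s|) / 6 ≤ A)
    (hb1 : |-S / 2 + t * C| / 4 ≤ A) (hb2 : |-S / 2 - t * C| / 4 ≤ A)
    (hc1 : (|c| + |-s * (-C / 2 - t * S) + c * (-S / 2 + t * C)| / 2) / 6 ≤ A)
    (hc2 : (|c| + |-s * (-C / 2 + t * S) + c * (-S / 2 - t * C)| / 2) / 6 ≤ A) :
    0.227498 ≤ A := by
  by_contra hA
  push Not at hA
  have b := two_abs (x := S) (y := t * C) (M := 4 * A) (by linarith) (by linarith)
  have d := two_abs (x := -s * C + c * S) (y := t * (c * C + s * S)) (M := 2 * (6 * A - |c|))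
    (by
      have e : -(-s * C + c * S) / 2 + t * (c * C + s * S) =
        -s * (-C / 2 - t * S) + c * (-S / 2 + t * C) := by ring
      rw [e]; linarith)
    (by
      have e : -(-s * C + c * S) / 2 - t * (c * C + s * S) =
        -s * (-C / 2 + t * S) + c * (-S / 2 - t * C) := by ring
      rw [e]; linarith)
  rw [abs_mul, abs_of_nonneg t0] at b d
  obtain ⟨n1, n2⟩ := scalar_num |c| |s| |C| |S| t (by simpa using h1) (by simpa using h2) ht t0
    (abs_nonneg _) sc (abs_nonneg _) (abs_nonneg _) hS (by linarith) (by linarith)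
  have n3 : 0 ≤ |S| * (|c| / 2 - t * |s|) := mul_nonneg (abs_nonneg _) n1
  have key : |C| * (|s| / 2 + t * |c|) - |S| * (|c| / 2 - t * |s|) ≤
      |-s * C + c * S| / 2 + t * |c * C + s * S| := by
    have g1 := mul_le_mul_of_nonneg_left (le_abs_self (c * C + s * S)) t0
    have g2 := mul_le_mul_of_nonneg_left (neg_le_abs (c * C + s * S)) t0
    have g3 := le_abs_self (-s * C + c * S)
    have g4 := neg_le_abs (-s * C + c * S)
    rcases abs_cases c with ⟨e1, -⟩ | ⟨e1, -⟩ <;> rcases abs_cases s with ⟨e2, -⟩ | ⟨e2, -⟩ <;>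
    rcases abs_cases C with ⟨e3, -⟩ | ⟨e3, -⟩ <;> rcases abs_cases S with ⟨e4, -⟩ | ⟨e4, -⟩ <;>
    rw [e1, e2, e4] at n3 <;> rw [e1, e2, e3, e4] <;> linarith
  linarith

lemma no_big (C S S1 S2 t : ℝ) (h2 : C ^ 2 + S ^ 2 = 1) (ht : t ^ 2 = 3 / 4)
    (hS1 : S1 = -S / 2 + t * C) (hS2 : S2 = -S / 2 - t * C)
    (q0 : 1 / 2 < |S|) (q1 : 1 / 2 < |S1|) (q2 : 1 / 2 < |S2|) : False := by
  have sq : ∀ x : ℝ, 1 / 2 < |x| → 1 / 4 < x ^ 2 := by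
    intro x hx; rw [← sq_abs]; nlinarith
  have k0 := sq _ q0
  have k1 := sq _ q1
  have k2 := sq _ q2
  have e : S1 * S2 = S ^ 2 - 3 / 4 := by
    rw [hS1, hS2]; linear_combination (-C ^ 2) * ht - (3 / 4) * h2
  have e' : S1 + S2 = -S := by rw [hS1, hS2]; ring
  have hx : S ^ 2 ≤ 1 := by linarith [sq_nonneg C]
  have hpos : 0 < (S1 ^ 2 - 1 / 4) * (S2 ^ 2 - 1 / 4) := mul_pos (by linarith) (by linarith)
  have hid : (S1 ^ 2 - 1 / 4) * (S2 ^ 2 - 1 / 4) = (S ^ 2 - 1) * (S ^ 2 - 1 / 4) := by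
    have : (S1 ^ 2 - 1 / 4) * (S2 ^ 2 - 1 / 4)
      = (S1 * S2) ^ 2 - 1 / 4 * ((S1 + S2) ^ 2 - 2 * (S1 * S2)) + 1 / 16 := by ring
    rw [this, e, e']; ring
  rw [hid] at hpos
  have : 0 ≤ (1 - S ^ 2) * (S ^ 2 - 1 / 4) := mul_nonneg (by linarith) (by linarith)
  linarith

lemma scalar_half (c s C S t A : ℝ) (h1 : c ^ 2 + s ^ 2 = 1) (h2 : C ^ 2 + S ^ 2 = 1)
    (ht : t ^ 2 = 3 / 4) (t0 : 0 ≤ t) (sc : |s| ≤ |c|)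
    (ha : (|c| + |s|) / 6 ≤ A)
    (hb0 : |S| / 4 ≤ A)
    (hb1 : |-S / 2 + t * C| / 4 ≤ A) (hb2 : |-S / 2 - t * C| / 4 ≤ A)
    (hc0 : (|c| + |-s * C + c * S| / 2) / 6 ≤ A)
    (hc1 : (|c| + |-s * (-C / 2 - t * S) + c * (-S / 2 + t * C)| / 2) / 6 ≤ A)
    (hc2 : (|c| + |-s * (-C / 2 + t * S) + c * (-S / 2 - t * C)| / 2) / 6 ≤ A) :
    0.227498 ≤ A := by
  by_cases q0 : |S| ≤ 1 / 2
  · exact scalar_core c s C S t A h1 h2 ht t0 sc q0 ha hb1 hb2 hc1 hc2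
  set C1 := -C / 2 - t * S with hC1
  set S1 := -S / 2 + t * C with hS1
  set C2 := -C / 2 + t * S with hC2
  set S2 := -S / 2 - t * C with hS2
  have x1 : -C1 / 2 - t * S1 = C2 := by rw [hC1, hS1, hC2]; linear_combination (-C) * ht
  have y1 : -S1 / 2 + t * C1 = S2 := by rw [hC1, hS1, hS2]; linear_combination (-S) * ht
  have x2 : -C1 / 2 + t * S1 = C := by rw [hC1, hS1]; linear_combination (C) * ht
  have y2 : -S1 / 2 - t * C1 = S := by rw [hC1, hS1]; linear_combination (S) * ht
  have z1 : -C2 / 2 - t * S2 = C := by rw [hC2, hS2]; linear_combination (C) * ht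
  have w1 : -S2 / 2 + t * C2 = S := by rw [hC2, hS2]; linear_combination (S) * ht
  have z2 : -C2 / 2 + t * S2 = C1 := by rw [hC2, hS2, hC1]; linear_combination (-C) * ht
  have w2 : -S2 / 2 - t * C2 = S1 := by rw [hC2, hS2, hS1]; linear_combination (-S) * ht
  by_cases q1 : |S1| ≤ 1 / 2
  · refine scalar_core c s C1 S1 t A h1 ?_ ht t0 sc q1 ha ?_ ?_ ?_ ?_
    · rw [hC1, hS1]; linear_combination (1 / 4 + t ^ 2) * h2 + ht
    all_goals simp only [x1, y1, x2, y2]; assumption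
  by_cases q2 : |S2| ≤ 1 / 2
  · refine scalar_core c s C2 S2 t A h1 ?_ ht t0 sc q2 ha ?_ ?_ ?_ ?_
    · rw [hC2, hS2]; linear_combination (1 / 4 + t ^ 2) * h2 + ht
    all_goals simp only [z1, w1, z2, w2]; assumption
  exact (no_big C S S1 S2 t h2 ht hS1 hS2 (not_le.1 q0) (not_le.1 q1) (not_le.1 q2)).elim

lemma scalar_full (c s C S t A : ℝ) (h1 : c ^ 2 + s ^ 2 = 1) (h2 : C ^ 2 + S ^ 2 = 1)
    (ht : t ^ 2 = 3 / 4) (t0 : 0 ≤ t)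
    (ha : (|c| + |s|) / 6 ≤ A)
    (hb0 : |S| / 4 ≤ A)
    (hb1 : |-S / 2 + t * C| / 4 ≤ A) (hb2 : |-S / 2 - t * C| / 4 ≤ A)
    (hc0 : (|c| + |-s * C + c * S| / 2) / 6 ≤ A)
    (hc1 : (|c| + |-s * (-C / 2 - t * S) + c * (-S / 2 + t * C)| / 2) / 6 ≤ A)
    (hc2 : (|c| + |-s * (-C / 2 + t * S) + c * (-S / 2 - t * C)| / 2) / 6 ≤ A)
    (hd0 : (|s| + |c * C + s * S| / 2) / 6 ≤ A)
    (hd1 : (|s| + |c * (-C / 2 - t * S) + s * (-S / 2 + t * C)| / 2) / 6 ≤ A)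
    (hd2 : (|s| + |c * (-C / 2 + t * S) + s * (-S / 2 - t * C)| / 2) / 6 ≤ A) :
    0.227498 ≤ A := by
  rcases le_total |s| |c| with h | h
  · exact scalar_half c s C S t A h1 h2 ht t0 h ha hb0 hb1 hb2 hc0 hc1 hc2
  · have neg : ∀ x y : ℝ, |-c * x + -s * y| = |c * x + s * y| := by
      intro x y; rw [← abs_neg]; congr 1; ring
    refine scalar_half (-s) c C S t A (by linarith) h2 ht t0 (by simpa using h)
      (by rw [abs_neg]; linarith) hb0 hb1 hb2 ?_ ?_ ?_ <;> rw [abs_neg, neg] <;> assumption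

noncomputable def fr (c s : ℝ) : Pl →ₗ[ℝ] ℝ :=
  c • (EuclideanSpace.proj (0 : Fin 2) : Pl →L[ℝ] ℝ).toLinearMap +
  s • (EuclideanSpace.proj (1 : Fin 2) : Pl →L[ℝ] ℝ).toLinearMap

lemma fr_apply (c s : ℝ) (z : Pl) : fr c s z = c * z 0 + s * z 1 := rfl

lemma fr_pt (c s x y : ℝ) : fr c s (pt x y) = c * x + s * y := by
  simp [fr_apply, pt]

lemma pt_one (x y : ℝ) : (pt x y) 1 = y := by simp [pt]

/-- Box bound with absolute values. -/
lemma box_abs (K : Set Pl) (hK : IsCompact K) (hc : Convex ℝ K) (f g : Pl →ₗ[ℝ] ℝ)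
    (h : ∀ e₁ ∈ K, ∀ e₂ ∈ K, ∀ e₃ ∈ K, ∀ e₄ ∈ K,
      (1 / 3 : ℝ) / 2 * ((f e₁ - f e₂) + (g e₃ - g e₄)) ≤ (volume K).toReal)
    (p q u v : Pl) (hp : p ∈ K) (hq : q ∈ K) (hu : u ∈ K) (hv : v ∈ K) :
    (|f p - f q| + |g u - g v|) / 6 ≤ (volume K).toReal := by
  have a1 := h p hp q hq u hu v hv
  have a2 := h p hp q hq v hv u hu
  have a3 := h q hq p hp u hu v hv
  have a4 := h q hq p hp v hv u hu
  rcases abs_cases (f p - f q) with h | h <;> rcases abs_cases (g u - g v) with h' | h' <;> linarith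

lemma square_box (K : Set Pl) (hK : IsCompact K) (hc : Convex ℝ K) (x1 y1 a c s : ℝ)
    (hsq : ∀ k, sqVertex x1 y1 a k ∈ K)
    (hcd : c = √2 / 2 * (cos a - sin a)) (hsd : s = √2 / 2 * (cos a + sin a))
    (p q u v : Pl) (hp : p ∈ K) (hq : q ∈ K) (hu : u ∈ K) (hv : v ∈ K) :
    (|fr c s p - fr c s q| + |fr (-s) c u - fr (-s) c v|) / 6 ≤ (volume K).toReal := by
  have w2 : (√2) ^ 2 = 2 := Real.sq_sqrt (by norm_num)
  have hcs := Real.cos_sq_add_sin_sq a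
  have cs : c ^ 2 + s ^ 2 = 1 := by
    rw [hcd, hsd]; linear_combination (√2) ^ 2 / 2 * hcs + 1 / 2 * w2
  have v0 : sqVertex x1 y1 a 0 = pt (x1 + √2 / 6 * cos a) (y1 + √2 / 6 * sin a) := by
    simp [sqVertex]
  have v1 : sqVertex x1 y1 a 1 = pt (x1 + √2 / 6 * (-sin a)) (y1 + √2 / 6 * cos a) := by
    simp [sqVertex, Real.cos_add_pi_div_two, Real.sin_add_pi_div_two]
  have v2 : sqVertex x1 y1 a 2 = pt (x1 + √2 / 6 * (-cos a)) (y1 + √2 / 6 * (-sin a)) := by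
    have : a + ((((2 : Fin 4) : ℕ) : ℝ)) * (π / 2) = a + π := by
      norm_num; ring
    rw [sqVertex, this, Real.cos_add_pi, Real.sin_add_pi]
  have v3 : sqVertex x1 y1 a 3 = pt (x1 + √2 / 6 * sin a) (y1 + √2 / 6 * (-cos a)) := by
    have : a + ((((3 : Fin 4) : ℕ) : ℝ)) * (π / 2) = (a + π / 2) + π := by
      norm_num; ring
    rw [sqVertex, this, Real.cos_add_pi, Real.sin_add_pi, Real.cos_add_pi_div_two,
      Real.sin_add_pi_div_two, neg_neg]
  refine box_abs K hK hc _ _ ?_ p q u v hp hq hu hv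
  intro e₁ h₁ e₂ h₂ e₃ h₃ e₄ h₄
  refine box K hK hc (fr c s) (fr (-s) c) ?_ (c * x1 + s * y1 - 1 / 6) (-s * x1 + c * y1 - 1 / 6)
    (1 / 3) (by norm_num) _ _ _ _ (hsq 3) (hsq 0) (hsq 2) (hsq 1) ?_ ?_ ?_ ?_ ?_ ?_ ?_ ?_
    e₁ e₂ e₃ e₄ h₁ h₂ h₃ h₄
  · intro A B C
    simp only [crossP, fr_apply]
    linear_combination (-((B 0 - A 0) * (C 1 - A 1) - (B 1 - A 1) * (C 0 - A 0))) * cs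
  all_goals
    first | rw [v0] | rw [v1] | rw [v2] | rw [v3]
    rw [fr_pt, hcd, hsd]
  · linear_combination (-(√2) ^ 2 / 12) * hcs - 1 / 12 * w2
  · linear_combination ((√2) ^ 2 / 12) * hcs + 1 / 12 * w2
  · linear_combination (-(√2) ^ 2 / 12) * hcs - 1 / 12 * w2
  · linear_combination ((√2) ^ 2 / 12) * hcs + 1 / 12 * w2
  · linear_combination (-(√2) ^ 2 / 12) * hcs - 1 / 12 * w2
  · linear_combination (-(√2) ^ 2 / 12) * hcs - 1 / 12 * w2
  · linear_combination ((√2) ^ 2 / 12) * hcs + 1 / 12 * w2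
  · linear_combination ((√2) ^ 2 / 12) * hcs + 1 / 12 * w2

theorem moser_lower_bound (x1 y1 a x2 y2 b : ℝ) :
    area x1 y1 a x2 y2 b ≥ 0.227498 := by
  unfold area
  set K := convexHull ℝ (config x1 y1 a x2 y2 b) with hKd
  have hfin : (config x1 y1 a x2 y2 b).Finite :=
    ((Set.toFinite _).union (Set.finite_range _)).union (Set.finite_range _)
  have hK : IsCompact K := cpt_hull hfin
  have hc : Convex ℝ K := convex_convexHull _ _
  have hsub : config x1 y1 a x2 y2 b ⊆ K := subset_convexHull _ _
  have hE : pt 0 0 ∈ K := hsub (by simp [config])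
  have hF : pt 1 0 ∈ K := hsub (by simp [config])
  have hsq : ∀ k, sqVertex x1 y1 a k ∈ K := fun k => hsub (by simp [config])
  have htr : ∀ k, triVertex x2 y2 b k ∈ K := fun k => hsub (by simp [config])
  set c := √2 / 2 * (cos a - sin a) with hcd
  set s := √2 / 2 * (cos a + sin a) with hsd
  have w2 : (√2) ^ 2 = 2 := Real.sq_sqrt (by norm_num)
  have w3 : (√3) ^ 2 = 3 := Real.sq_sqrt (by norm_num)
  have hcs : c ^ 2 + s ^ 2 = 1 := by
    rw [hcd, hsd]
    linear_combination (√2) ^ 2 / 2 * Real.cos_sq_add_sin_sq a + 1 / 2 * w2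
  have B := square_box K hK hc x1 y1 a c s hsq hcd hsd
  have H := height K hK hc hE hF
  have Habs : ∀ p ∈ K, ∀ q ∈ K, |p 1 - q 1| / 2 ≤ (volume K).toReal := by
    intro p hp q hq
    have h1 := H p q hp hq
    have h2 := H q p hq hp
    rcases abs_cases (p 1 - q 1) with h | h <;> linarith
  have c23 : cos (2 * π / 3) = -1 / 2 := by
    rw [show 2 * π / 3 = π - π / 3 by ring, Real.cos_pi_sub, Real.cos_pi_div_three]; ring
  have s23 : sin (2 * π / 3) = √3 / 2 := by
    rw [show 2 * π / 3 = π - π / 3 by ring, Real.sin_pi_sub, Real.sin_pi_div_three]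
  have c43 : cos (2 * (2 * π / 3)) = -1 / 2 := by
    rw [Real.cos_two_mul, c23]; norm_num
  have s43 : sin (2 * (2 * π / 3)) = -√3 / 2 := by
    rw [Real.sin_two_mul, c23, s23]; ring
  have u0 : triVertex x2 y2 b 0 = pt (x2 + √3 / 6 * cos b) (y2 + √3 / 6 * sin b) := by
    simp [triVertex]
  have u1 : triVertex x2 y2 b 1 = pt (x2 + √3 / 6 * (cos b * (-1 / 2) - sin b * (√3 / 2)))
      (y2 + √3 / 6 * (sin b * (-1 / 2) + cos b * (√3 / 2))) := by
    have : b + ((((1 : Fin 3) : ℕ) : ℝ)) * (2 * π / 3) = b + 2 * π / 3 := by norm_num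
    rw [triVertex, this, Real.cos_add, Real.sin_add, c23, s23]
  have u2 : triVertex x2 y2 b 2 = pt (x2 + √3 / 6 * (cos b * (-1 / 2) - sin b * (-√3 / 2)))
      (y2 + √3 / 6 * (sin b * (-1 / 2) + cos b * (-√3 / 2))) := by
    have : b + ((((2 : Fin 3) : ℕ) : ℝ)) * (2 * π / 3) = b + 2 * (2 * π / 3) := by norm_num
    rw [triVertex, this, Real.cos_add, Real.sin_add, c43, s43]
  have m0 := htr 0
  have m1 := htr 1
  have m2 := htr 2
  rw [u0] at m0
  rw [u1] at m1
  rw [u2] at m2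
  have half : ∀ {x y : ℝ}, x = y / 2 → |x| = |y| / 2 := by
    intro x y h; rw [h, abs_div, abs_two]
  -- the three side vectors of the triangle, evaluated against a linear functional
  have k0 : ∀ p q : ℝ, |fr p q (pt (x2 + √3 / 6 * (cos b * (-1 / 2) - sin b * (√3 / 2)))
      (y2 + √3 / 6 * (sin b * (-1 / 2) + cos b * (√3 / 2)))) -
      fr p q (pt (x2 + √3 / 6 * (cos b * (-1 / 2) - sin b * (-√3 / 2)))
      (y2 + √3 / 6 * (sin b * (-1 / 2) + cos b * (-√3 / 2))))| =
      |p * (-sin b) + q * cos b| / 2 := by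
    intro p q
    apply half
    rw [fr_pt, fr_pt]
    linear_combination (p * (-sin b) + q * cos b) / 6 * w3
  have k1 : ∀ p q : ℝ, |fr p q (pt (x2 + √3 / 6 * (cos b * (-1 / 2) - sin b * (-√3 / 2)))
      (y2 + √3 / 6 * (sin b * (-1 / 2) + cos b * (-√3 / 2)))) -
      fr p q (pt (x2 + √3 / 6 * cos b) (y2 + √3 / 6 * sin b))| =
      |p * (-(-sin b) / 2 - √3 / 2 * cos b) + q * (-cos b / 2 + √3 / 2 * (-sin b))| / 2 := by
    intro p q
    apply half
    rw [fr_pt, fr_pt]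
    linear_combination (p * sin b - q * cos b) / 12 * w3
  have k2 : ∀ p q : ℝ, |fr p q (pt (x2 + √3 / 6 * cos b) (y2 + √3 / 6 * sin b)) -
      fr p q (pt (x2 + √3 / 6 * (cos b * (-1 / 2) - sin b * (√3 / 2)))
      (y2 + √3 / 6 * (sin b * (-1 / 2) + cos b * (√3 / 2))))| =
      |p * (-(-sin b) / 2 + √3 / 2 * cos b) + q * (-cos b / 2 - √3 / 2 * (-sin b))| / 2 := by
    intro p q
    apply half
    rw [fr_pt, fr_pt]
    linear_combination (p * sin b - q * cos b) / 12 * w3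
  have ef : |fr c s (pt 1 0) - fr c s (pt 0 0)| = |c| := by simp [fr_pt]
  have eg : |fr (-s) c (pt 1 0) - fr (-s) c (pt 0 0)| = |s| := by simp [fr_pt]
  have hv : ∀ z : Pl, z 1 = fr 0 1 z := by intro z; simp [fr_apply]
  simp only [hv] at Habs
  refine scalar_full c s (-sin b) (cos b) (√3 / 2) _ hcs (by rw [neg_sq]; exact sin_sq_add_cos_sq b)
    (by rw [div_pow, w3]; norm_num) (by positivity) ?_ ?_ ?_ ?_ ?_ ?_ ?_ ?_ ?_ ?_
  · have := B _ _ _ _ hF hE hF hE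
    rwa [ef, eg] at this
  · have := Habs _ m1 _ m2
    rw [k0, zero_mul, zero_add, one_mul] at this
    linarith
  · have := Habs _ m2 _ m0
    rw [k1, zero_mul, zero_add, one_mul] at this
    linarith
  · have := Habs _ m0 _ m1
    rw [k2, zero_mul, zero_add, one_mul] at this
    linarith
  · have := B _ _ _ _ hF hE m1 m2
    rwa [ef, k0] at this
  · have := B _ _ _ _ hF hE m2 m0
    rwa [ef, k1] at this
  · have := B _ _ _ _ hF hE m0 m1
    rwa [ef, k2] at this
  · have := B _ _ _ _ m1 m2 hF hE
    rwa [eg, k0, add_comm] at this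
  · have := B _ _ _ _ m2 m0 hF hE
    rwa [eg, k1, add_comm] at this
  · have := B _ _ _ _ m0 m1 hF hE
    rwa [eg, k2, add_comm] at this
end

section
/- Every convex universal cover for unit-length planar arcs has 2-dimensional Lebesgue measure at least 0.227498. -/
open Real MeasureTheory

lemma trip {a1 b1 a2 b2 a3 b3 k : ℝ} (h1 : a1^2+b1^2=1) (h2 : a2^2+b2^2=1) (h3 : a3^2+b3^2=1)
    (ha : a1+a2+a3=0) (hb : b1+b2+b3=0) (k2 : |b2| < k) (k3 : |b3| < k) :
    |b1| + √3 * |a1| < 2*k := by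
  have ea : a3 = -a1-a2 := by linarith
  have eb : b3 = -b1-b2 := by linarith
  subst ea eb
  have hd : a1*a2+b1*b2 = -1/2 := by nlinarith
  have hsq : (2*b2+b1)^2 = 3*a1^2 := by
    have e1 : (2*a2+a1)*a1 + (2*b2+b1)*b1 = 0 := by linarith
    have e2 : (2*a2+a1)^2+(2*b2+b1)^2 = 3 := by linarith
    linear_combination (-(2*b2+b1)^2) * h1 + ((2*b2+b1)*b1 - (2*a2+a1)*a1) * e1 + a1^2 * e2
  have : √3 * |a1| = |2*b2+b1| := by
    rw [← Real.sqrt_sq_eq_abs (2*b2+b1), hsq, Real.sqrt_mul (by norm_num), Real.sqrt_sq_eq_abs]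
  rw [this]
  rw [abs_lt] at k2 k3
  rcases abs_cases b1 with h | h <;> rcases abs_cases (2*b2+b1) with h' | h' <;> linarith

lemma final {c σ a b : ℝ} (hσ : 0 ≤ σ) (hc : σ ≤ c) (h1 : c^2+σ^2=1) (h6 : c+σ < 6*0.227498)
    (hab : a^2+b^2=1) (ha0 : 0 ≤ a) (ha : 3/4 ≤ a^2) (hk : |b| + √3*a < 2*(4*0.227498)) 
    (hF : c + ((σ*a+c*b) + √3*(c*a-σ*b))/4 < 6*0.227498) : False := by
  have w1 : (1.7320508:ℝ) < √3 := Real.lt_sqrt_of_sq_lt (by norm_num)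
  have w2 : √3 < (1.7320509:ℝ) := by rw [Real.sqrt_lt' (by norm_num)]; norm_num
  have w3 : √3^2 = (3:ℝ) := Real.sq_sqrt (by norm_num)
  set w := √3
  -- bound on b
  have hb2 : |b|^2 = 1 - a^2 := by rw [sq_abs]; linarith
  have hb0 := abs_nonneg b
  have hbh : |b| ≤ 1/2 := by nlinarith
  have hbb : |b| < 0.0959196 := by
    by_contra! hh
    have : (w*a)^2 < (2*(4*0.227498)-|b|)^2 := by
      apply pow_lt_pow_left₀ <;> first | positivity | linarith
    have : (w*a)^2 = 3*(1-|b|^2) := by rw [mul_pow, w3]; linarith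
    have := mul_nonneg (sub_nonneg.2 hh) (sub_nonneg.2 hbh)
    linarith
  have hb : -0.0959196 ≤ b := by have := neg_abs_le b; linarith
  have haa : 0.995389 ≤ a := by
    by_contra! hh
    have : a^2 < 0.995389^2 := pow_lt_pow_left₀ hh ha0 (by norm_num)
    have : |b|^2 < 0.0959196^2 := pow_lt_pow_left₀ hbb hb0 (by norm_num)
    linarith
  have hs : σ ≤ 0.49755634 := by
    by_contra! hh
    have : c^2 < (6*0.227498-σ)^2 := pow_lt_pow_left₀ (by linarith) (by linarith) (by norm_num)
    have h7 : σ ≤ 0.682494 := by linarith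
    have := mul_nonneg (sub_nonneg.2 hh.le) (sub_nonneg.2 h7)
    linarith
  have hc2 : 0.8674 ≤ c := by
    by_contra! hh
    have : c^2 < 0.8674^2 := pow_lt_pow_left₀ hh (by linarith) (by norm_num)
    have : σ^2 ≤ 0.49755634^2 := pow_le_pow_left₀ hσ hs 2
    linarith
  have hpos : 0 ≤ c - w*σ := by
    have : w*σ ≤ 1.7320509 * 0.49755634 := by gcongr
    linarith
  have e1 : 0.995389*(w*c+σ) ≤ a*(w*c+σ) := by
    apply mul_le_mul_of_nonneg_right haa; positivity
  have e2 : -0.0959196*(c - w*σ) ≤ b * (c-w*σ) := mul_le_mul_of_nonneg_right hb hpos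
  have e3 : 1.7320508 * c ≤ w * c := mul_le_mul_of_nonneg_right w1.le (by linarith)
  have e4 : 1.7320508 * σ ≤ w * σ := mul_le_mul_of_nonneg_right w1.le (by linarith)
  -- chord
  have hch : 1 - 0.266439*σ ≤ c := by
    by_contra! hh
    have : c^2 < (1 - 0.266439*σ)^2 := by
      apply pow_lt_pow_left₀ hh (by linarith) (by norm_num)
    have : σ * ((1+0.266439^2)*σ - 2*0.266439) > 0 := by linarith
    have : σ * ((1+0.266439^2)*σ - 2*0.266439) ≤ 0 := mul_nonpos_of_nonneg_of_nonpos hσ (by linarith)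
    linarith
  linarith

lemma core {c σ x1 y1 x2 y2 x3 y3 : ℝ} (hσ : 0 ≤ σ) (hc : σ ≤ c) (h1 : c^2+σ^2=1) (h6 : c+σ < 6*0.227498)
    (d1 : x1^2+y1^2=1) (d2 : x2^2+y2^2=1) (d3 : x3^2+y3^2=1) (sx : x1+x2+x3=0) (sy : y1+y2+y3=0)
    (k1 : |c*y1-σ*x1| < 4*0.227498) (k2 : |c*y2-σ*x2| < 4*0.227498) (k3 : |c*y3-σ*x3| < 4*0.227498)
    (l1 : c + |y1|/2 < 6*0.227498) (l2 : c + |y2|/2 < 6*0.227498) (l3 : c + |y3|/2 < 6*0.227498) :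
    False := by
  have key : ∀ {x1 y1 x2 y2 x3 y3 : ℝ}, 
    x1^2+y1^2=1 →  x2^2+y2^2=1 →  x3^2+y3^2=1 →  x1+x2+x3=0 →  y1+y2+y3=0 → 
     |c*y2-σ*x2| < 4*0.227498 →  |c*y3-σ*x3| < 4*0.227498 →
     c + |y2|/2 < 6*0.227498 →  c + |y3|/2 < 6*0.227498 →
     0 ≤ (c*x2+σ*y2)*(c*x3+σ*y3) → False := by
    intro x1 y1 x2 y2 x3 y3 d1 d2 d3 sx sy k2 k3 l2 l3 hp
    have rot : ∀ x y : ℝ, x^2+y^2=1 → (c*x+σ*y)^2+(c*y-σ*x)^2=1 := by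
      intro x y h
      linear_combination (x^2+y^2)*h1 + h
    have r1 := rot _ _ d1
    have r2 := rot _ _ d2
    have r3 := rot _ _ d3
    have T := trip r1 r2 r3 (by linear_combination c*sx+σ*sy) (by linear_combination c*sy-σ*sx) k2 k3
    have T' := trip (k := 2*(6*0.227498-c)) d1 d2 d3 sx sy (by linarith) (by linarith)
    have hx1 : x1 = -x2-x3 := by linarith
    have hy1 : y1 = -y2-y3 := by linarith
    have hdot : x2*x3+y2*y3 = -1/2 := by rw [hx1, hy1] at d1; linarith
    have hdot' : (c*x2+σ*y2)*(c*x3+σ*y3) + (c*y2-σ*x2)*(c*y3-σ*x3) = -1/2 := by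
      linear_combination (x2*x3+y2*y3)*h1 + hdot
    have ha : 3/4 ≤ (c*x1+σ*y1)^2 := by
      have e : (c*x1+σ*y1) = -(c*x2+σ*y2)-(c*x3+σ*y3) := by rw [hx1, hy1]; ring
      have e2 : c*x1+σ*y1 + ((c*x2+σ*y2)+(c*x3+σ*y3)) = 0 := by linarith
      have e' : (c*y1-σ*x1) = -(c*y2-σ*x2)-(c*y3-σ*x3) := by rw [hx1, hy1]; ring
      generalize (c*x2+σ*y2) = A2 at *
      generalize (c*x3+σ*y3) = A3 at *
      generalize (c*y2-σ*x2) = B2 at *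
      generalize (c*y3-σ*x3) = B3 at *
      -- (A2A3+1/2)^2 = B2²B3² = (1-A2²)(1-A3²)
      have q : (A2*A3+1/2)^2 = (1-A2^2)*(1-A3^2) := by
        have : A2*A3+1/2 = -(B2*B3) := by linarith
        have f2 : 1-A2^2 = B2^2 := by linarith
        have f3 : 1-A3^2 = B3^2 := by linarith
        rw [this, f2, f3]; ring
      rw [e]
      have : (-A2-A3)^2 = 3/4 + A2*A3 := by linear_combination q
      linarith
    have X : x1 = c*(c*x1+σ*y1) - σ*(c*y1-σ*x1) := by linear_combination (-x1)*h1
    have Y : y1 = σ*(c*x1+σ*y1) + c*(c*y1-σ*x1) := by linear_combination (-y1)*h1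
    have w1 : 0 ≤ √3 := Real.sqrt_nonneg 3
    rcases le_total 0 (c*x1+σ*y1) with h | h
    · rw [abs_of_nonneg h] at T
      refine final hσ hc h1 h6 r1 h ha T ?_
      rw [← X, ← Y]
      have := mul_le_mul_of_nonneg_left (le_abs_self x1) w1
      have := le_abs_self y1
      linarith
    · rw [abs_of_nonpos h, ← abs_neg] at T
      refine final hσ hc h1 h6 (a := -(c*x1+σ*y1)) (b := -(c*y1-σ*x1)) (by linarith) (by linarith) (by linarith) T ?_
      have X' : c * -(c*x1+σ*y1) - σ * -(c*y1-σ*x1) = -x1 := by linarith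
      have Y' : σ * -(c*x1+σ*y1) + c * -(c*y1-σ*x1) = -y1 := by linarith
      rw [X', Y']
      have := mul_le_mul_of_nonneg_left (neg_le_abs x1) w1
      have := neg_le_abs y1
      linarith
  by_cases p1 : 0 ≤ (c*x2+σ*y2)*(c*x3+σ*y3)
  · exact key d1 d2 d3 sx sy k2 k3 l2 l3 p1
  by_cases p2 : 0 ≤ (c*x3+σ*y3)*(c*x1+σ*y1)
  · exact key d2 d3 d1 (by linarith) (by linarith) k3 k1 l3 l1 p2
  by_cases p3 : 0 ≤ (c*x1+σ*y1)*(c*x2+σ*y2)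
  · exact key d3 d1 d2 (by linarith) (by linarith) k1 k2 l1 l2 p3
  push Not at p1 p2 p3
  have e : (c*x1+σ*y1) = -(c*x2+σ*y2)-(c*x3+σ*y3) := by linear_combination c*sx+σ*sy
  rw [e] at p2 p3
  nlinarith [sq_nonneg (c*x2+σ*y2), sq_nonneg (c*x3+σ*y3)]

lemma core' {c σ x1 y1 x2 y2 x3 y3 : ℝ} (h1 : c^2+σ^2=1) (h6 : |c|+|σ| < 6*0.227498)
    (d1 : x1^2+y1^2=1) (d2 : x2^2+y2^2=1) (d3 : x3^2+y3^2=1) (sx : x1+x2+x3=0) (sy : y1+y2+y3=0)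
    (k1 : |c*y1-σ*x1| < 4*0.227498) (k2 : |c*y2-σ*x2| < 4*0.227498) (k3 : |c*y3-σ*x3| < 4*0.227498)
    (l1 : |c| + |y1|/2 < 6*0.227498) (l2 : |c| + |y2|/2 < 6*0.227498) (l3 : |c| + |y3|/2 < 6*0.227498)
    (m1 : |σ| + |x1|/2 < 6*0.227498) (m2 : |σ| + |x2|/2 < 6*0.227498) (m3 : |σ| + |x3|/2 < 6*0.227498) :
    False := by
  -- make c nonneg
  wlog hc : 0 ≤ c generalizing c x1 x2 x3
  · refine this (c := -c) (x1 := -x1) (x2 := -x2) (x3 := -x3) (by simpa using h1) (by simpa using h6)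
      (by simpa using d1) (by simpa using d2) (by simpa using d3) (by linarith) ?_ ?_ ?_ 
      (by simpa using l1) (by simpa using l2) (by simpa using l3) (by simpa using m1) (by simpa using m2)
      (by simpa using m3) (by linarith)
    · rw [← abs_neg]; convert k1 using 2; ring
    · rw [← abs_neg]; convert k2 using 2; ring
    · rw [← abs_neg]; convert k3 using 2; ring
  wlog hs : 0 ≤ σ generalizing σ y1 y2 y3
  · refine this (σ := -σ) (y1 := -y1) (y2 := -y2) (y3 := -y3) (by linarith) (by simpa using h1) (by simpa using h6)
      (by simpa using d1) (by simpa using d2) (by simpa using d3) ?_ ?_ ?_ 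
      (by simpa using l1) (by simpa using l2) (by simpa using l3) (by simpa using m1) (by simpa using m2)
      (by simpa using m3) (by linarith)
    · rw [← abs_neg]; convert k1 using 2; ring
    · rw [← abs_neg]; convert k2 using 2; ring
    · rw [← abs_neg]; convert k3 using 2; ring
  rw [abs_of_nonneg hc] at *
  rw [abs_of_nonneg hs] at *
  rcases le_total σ c with h | h
  · exact core hs h h1 h6 d1 d2 d3 sx sy k1 k2 k3 l1 l2 l3
  · rw [abs_sub_comm] at k1 k2 k3
    exact core hc h (by linarith) (by linarith) (by linarith) (by linarith) (by linarith) sy sx k1 k2 k3 m1 m2 m3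

def otri (A u v : ℝ × ℝ) : Set (ℝ × ℝ) :=
  {p | ∃ s t : ℝ, 0 < s ∧ 0 < t ∧ s + t < 1 ∧ p = A + (s • u + t • v)}

lemma std_tri : volume {p : ℝ × ℝ | 0 < p.1 ∧ 0 < p.2 ∧ p.1 + p.2 < 1} = ENNReal.ofReal (1/2) := by
  have h := volume_regionBetween_eq_integral (μ := (volume : Measure ℝ)) (f := fun _ => (0:ℝ)) (g := fun x => 1 - x)
    (s := Set.Ioc 0 1) (Continuous.integrableOn_Ioc (by fun_prop)) (Continuous.integrableOn_Ioc (by fun_prop))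
    measurableSet_Ioc (by intro x hx; simpa using hx.2)
  have e : {p : ℝ × ℝ | 0 < p.1 ∧ 0 < p.2 ∧ p.1 + p.2 < 1} = regionBetween (fun _ => (0:ℝ)) (fun x => 1 - x) (Set.Ioc 0 1) := by
    ext ⟨x, y⟩
    simp only [regionBetween, Set.mem_ofPred_eq, Set.mem_Ioc, Set.mem_Ioo]
    constructor
    · rintro ⟨h1, h2, h3⟩; refine ⟨⟨h1, ?_⟩, h2, ?_⟩ <;> linarith
    · rintro ⟨⟨h1, _⟩, h2, h3⟩; refine ⟨h1, h2, ?_⟩; linarith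
  rw [e, Measure.volume_eq_prod, h]
  congr 1
  rw [← intervalIntegral.integral_of_le (by norm_num)]
  simp only [Pi.sub_apply, sub_zero]
  rw [intervalIntegral.integral_sub (by simp) (by simp)]
  simp [integral_id]
  norm_num

lemma otri_convex (A u v : ℝ × ℝ) : Convex ℝ (otri A u v) := by
  rintro _ ⟨s, t, hs, ht, hst, rfl⟩ _ ⟨s', t', hs', ht', hst', rfl⟩ a b ha hb hab
  rcases ha.eq_or_lt with rfl | ha
  · have : b = 1 := by linarith
    subst this
    exact ⟨s', t', hs', ht', hst', by simp⟩
  refine ⟨a*s+b*s', a*t+b*t', by positivity, by positivity, by nlinarith, ?_⟩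
  have hb' : b = 1 - a := by linarith
  subst hb'
  ext <;> simp <;> ring

lemma otri_vol (A u v : ℝ × ℝ) : volume (otri A u v) = ENNReal.ofReal (|u.1*v.2-u.2*v.1|/2) := by
  set L := Matrix.toLin (Module.Basis.finTwoProd ℝ) (Module.Basis.finTwoProd ℝ) !![u.1, v.1; u.2, v.2] with hL
  have e : otri A u v = (fun x => A + x) '' (L '' {p : ℝ × ℝ | 0 < p.1 ∧ 0 < p.2 ∧ p.1 + p.2 < 1}) := by
    ext p
    simp only [otri, Set.mem_ofPred_eq, Set.mem_image]
    constructor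
    · rintro ⟨s, t, hs, ht, hst, rfl⟩
      refine ⟨_, ⟨(s,t), ⟨hs, ht, hst⟩, rfl⟩, ?_⟩
      rw [hL, Matrix.toLin_finTwoProd_apply]
      ext <;> simp <;> ring
    · rintro ⟨_, ⟨⟨s,t⟩, ⟨hs, ht, hst⟩, rfl⟩, rfl⟩
      refine ⟨s, t, hs, ht, hst, ?_⟩
      rw [hL, Matrix.toLin_finTwoProd_apply]
      ext <;> simp <;> ring
  have hd : LinearMap.det L = u.1*v.2-u.2*v.1 := by
    rw [hL, LinearMap.det_toLin, Matrix.det_fin_two_of]; ring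
  rw [e, Set.image_add_left, measure_preimage_add, Measure.addHaar_image_linearMap, std_tri, hd,
    ← ENNReal.ofReal_mul (abs_nonneg _)]
  congr 1; ring

lemma otri_sub {K : Set (ℝ × ℝ)} (hK : Convex ℝ K) {A u v : ℝ × ℝ} (hA : A ∈ K) (hu : A + u ∈ K) (hv : A + v ∈ K) :
    otri A u v ⊆ K := by
  rintro _ ⟨s, t, hs, ht, hst, rfl⟩
  have := hK.sum_mem (t := Finset.univ) (w := ![1-s-t, s, t]) (z := ![A, A+u, A+v])
    (by intro i _; fin_cases i <;> simp <;> linarith) (by simp [Fin.sum_univ_three]; ring)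
    (by intro i _; fin_cases i <;> simp [*])
  convert this using 1
  simp [Fin.sum_univ_three]
  ext <;> simp <;> ring

lemma vol_union {s t : Set (ℝ × ℝ)} {a b : ℝ} (ht : Convex ℝ t) (hd : ∀ p ∈ s, p ∈ t → False)
    (ha : 0 ≤ a) (hb : 0 ≤ b)
    (hs : ENNReal.ofReal a ≤ volume s) (hb' : ENNReal.ofReal b ≤ volume t) :
    ENNReal.ofReal (a + b) ≤ volume (s ∪ t) := by
  rw [measure_union₀ (ht.nullMeasurableSet volume) (Set.disjoint_left.2 hd).aedisjoint, ENNReal.ofReal_add ha hb]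
  gcongr

lemma quad {K : Set (ℝ × ℝ)} (hK : Convex ℝ K) {A B C D : ℝ × ℝ} (hA : A ∈ K) (hB : B ∈ K) (hC : C ∈ K) (hD : D ∈ K) :
    ENNReal.ofReal (|(B.1-A.1)*(D.2-C.2)-(B.2-A.2)*(D.1-C.1)|/2) ≤ volume K := by
  have s1 : otri A (B-A) (D-A) ⊆ K := otri_sub hK hA (by simpa using hB) (by simpa using hD)
  have s2 : otri A (B-A) (C-A) ⊆ K := otri_sub hK hA (by simpa using hB) (by simpa using hC)
  have v1 := otri_vol A (B-A) (D-A)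
  have v2 := otri_vol A (B-A) (C-A)
  set x := (B-A).1*(D-A).2-(B-A).2*(D-A).1 with hx
  set y := (B-A).1*(C-A).2-(B-A).2*(C-A).1 with hy
  have hxy : (B.1-A.1)*(D.2-C.2)-(B.2-A.2)*(D.1-C.1) = x - y := by
    simp only [hx, hy, Prod.fst_sub, Prod.snd_sub]; ring
  rw [hxy]
  by_cases h : x * y < 0
  · have := vol_union (otri_convex A (B-A) (C-A)) (s := otri A (B-A) (D-A)) (a := |x|/2) (b := |y|/2) ?_ (by positivity) (by positivity) v1.ge v2.ge
    · refine le_trans (le_trans (ENNReal.ofReal_le_ofReal ?_) this) (measure_mono (Set.union_subset s1 s2))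
      have := abs_sub x y
      linarith
    · rintro _ ⟨s, t, hs, ht, hst, rfl⟩ ⟨s', t', hs', ht', hst', e⟩
      have e1 := congrArg Prod.fst e
      have e2 := congrArg Prod.snd e
      simp only [Prod.fst_add, Prod.snd_add, Prod.smul_fst, Prod.smul_snd, smul_eq_mul] at e1 e2
      have : t * x = t' * y := by
        rw [hx, hy]; linear_combination (B-A).1 * e2 - (B-A).2 * e1
      have h1 : t * (x * x) = t' * (x * y) := by linear_combination x * this
      have := mul_neg_of_pos_of_neg ht' h
      have := mul_nonneg ht.le (mul_self_nonneg x)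
      linarith
  · have : |x - y| ≤ |x| ∨ |x - y| ≤ |y| := by
      push Not at h
      rcases mul_nonneg_iff.1 h with ⟨h1, h2⟩ | ⟨h1, h2⟩
      · rw [abs_of_nonneg h1, abs_of_nonneg h2]
        rcases abs_cases (x-y) with h | h
        · left; linarith
        · right; linarith
      · rw [abs_of_nonpos h1, abs_of_nonpos h2]
        rcases abs_cases (x-y) with h | h
        · right; linarith
        · left; linarith
    rcases this with h | h
    · exact le_trans (ENNReal.ofReal_le_ofReal (by linarith)) (v1.ge.trans (measure_mono s1))
    · exact le_trans (ENNReal.ofReal_le_ofReal (by linarith)) (v2.ge.trans (measure_mono s2))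

lemma corner_s1 {s s' t t' p1 p2 q1 q2 : ℝ} (hs : 0 < s) (hs' : 0 < s') (ht : 0 < t) (ht' : 0 < t')
    (hp : p1 ≤ 0) (hq : q2 ≤ 0) (h1 : p1 ≤ q1) (h2 : q2 ≤ p2) (e1 : t*p1 = s' + t'*q1)
    (e2 : s + t*p2 = t'*q2) : False := by
  have a1 := mul_le_mul_of_nonneg_left h1 ht'.le
  have a2 := mul_le_mul_of_nonneg_left h2 ht.le
  rcases le_total t t' with h | h
  · have := mul_le_mul_of_nonpos_right h hq
    linarith
  · have := mul_le_mul_of_nonpos_right h hp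
    linarith

lemma rect_aux {K : Set (ℝ × ℝ)} (hK : Convex ℝ K) (h00 : ((0:ℝ),(0:ℝ)) ∈ K) (h10 : ((1/3:ℝ),(0:ℝ)) ∈ K)
    (h01 : ((0:ℝ),(1/3:ℝ)) ∈ K) (h11 : ((1/3:ℝ),(1/3:ℝ)) ∈ K) {l1 l2 r1 r2 b1 b2 c1 c2 : ℝ} 
    (hL : (l1,l2) ∈ K) (hR : (r1,r2) ∈ K) (hB : (b1,b2) ∈ K) (hT : (c1,c2) ∈ K)
    (hl : l1 ≤ 0) (hr : 1/3 ≤ r1) (hb : b2 ≤ 0) (hc : 1/3 ≤ c2)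
    (x1 : l1 ≤ b1) (x2 : b1 ≤ r1) (x3 : l1 ≤ c1) (x4 : c1 ≤ r1)
    (y1 : b2 ≤ l2) (y2 : l2 ≤ c2) (y3 : b2 ≤ r2) (y4 : r2 ≤ c2) :
    ENNReal.ofReal ((r1-l1+c2-b2)/6) ≤ volume K := by
  have s1 : otri (0,0) (1/3,0) (0,1/3) ⊆ K := otri_sub hK h00 (by simpa using h10) (by simpa using h01)
  have s2 : otri (1/3,1/3) (-1/3,0) (0,-1/3) ⊆ K := 
    otri_sub hK h11 (by convert h01 using 1; ext <;> norm_num) (by convert h10 using 1; ext <;> norm_num)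
  have s3 : otri (0,0) (0,1/3) (l1,l2) ⊆ K := otri_sub hK h00 (by simpa using h01) (by simpa using hL)
  have s4 : otri (1/3,0) (0,1/3) (r1-1/3,r2) ⊆ K := otri_sub hK h10 (by simpa using h11) (by simpa using hR)
  have s5 : otri (0,0) (1/3,0) (b1,b2) ⊆ K := otri_sub hK h00 (by simpa using h10) (by simpa using hB)
  have s6 : otri (0,1/3) (1/3,0) (c1,c2-1/3) ⊆ K := otri_sub hK h01 (by simpa using h11) (by simpa using hT)
  have v1 : ENNReal.ofReal (1/18) ≤ volume (otri (0,0) (1/3,0) (0,1/3)) := by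
    rw [otri_vol]; apply ENNReal.ofReal_le_ofReal; norm_num [abs_of_pos]
  have v2 : ENNReal.ofReal (1/18) ≤ volume (otri (1/3,1/3) (-1/3,0) (0,-1/3)) := by
    rw [otri_vol]; apply ENNReal.ofReal_le_ofReal; norm_num [abs_of_pos]
  have v3 : ENNReal.ofReal (-l1/6) ≤ volume (otri (0,0) (0,1/3) (l1,l2)) := by
    rw [otri_vol]; apply ENNReal.ofReal_le_ofReal
    have := neg_le_abs (0*l2-1/3*l1)
    have := le_abs_self (0*l2-1/3*l1)
    simp only at *; linarith
  have v4 : ENNReal.ofReal ((r1-1/3)/6) ≤ volume (otri (1/3,0) (0,1/3) (r1-1/3,r2)) := by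
    rw [otri_vol]; apply ENNReal.ofReal_le_ofReal
    have := neg_le_abs (0*r2-1/3*(r1-1/3))
    simp only at *; linarith
  have v5 : ENNReal.ofReal (-b2/6) ≤ volume (otri (0,0) (1/3,0) (b1,b2)) := by
    rw [otri_vol]; apply ENNReal.ofReal_le_ofReal
    have := neg_le_abs (1/3*b2-0*b1)
    simp only at *; linarith
  have v6 : ENNReal.ofReal ((c2-1/3)/6) ≤ volume (otri (0,1/3) (1/3,0) (c1,c2-1/3)) := by
    rw [otri_vol]; apply ENNReal.ofReal_le_ofReal
    have := le_abs_self (1/3*(c2-1/3)-0*c1)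
    simp only at *; linarith
  have m1 : ∀ p ∈ otri (0,0) (1/3,0) (0,1/3), 0 < p.1 ∧ 0 < p.2 ∧ p.1 + p.2 < 1/3 := by
    rintro _ ⟨s, t, hs, ht, hst, rfl⟩
    simp; refine ⟨by linarith, by linarith, by linarith⟩
  have m2 : ∀ p ∈ otri (1/3,1/3) (-1/3,0) (0,-1/3), p.1 < 1/3 ∧ p.2 < 1/3 ∧ 1/3 < p.1 + p.2 := by
    rintro _ ⟨s, t, hs, ht, hst, rfl⟩
    simp; refine ⟨by linarith, by linarith, by linarith⟩
  have m3 : ∀ p ∈ otri (0,0) (0,1/3) (l1,l2), ∃ s t, 0 < s ∧ 0 < t ∧ s + t < 1 ∧ p.1 = t*l1 ∧ p.2 = s/3+t*l2 ∧ p.1 ≤ 0 := by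
    rintro _ ⟨s, t, hs, ht, hst, rfl⟩
    refine ⟨s, t, hs, ht, hst, by simp, by simp; ring, ?_⟩
    have := mul_nonpos_of_nonneg_of_nonpos ht.le hl
    simpa using this
  have m4 : ∀ p ∈ otri (1/3,0) (0,1/3) (r1-1/3,r2), ∃ s t, 0 < s ∧ 0 < t ∧ s + t < 1 ∧ p.1 = 1/3+t*(r1-1/3) ∧ p.2 = s/3+t*r2 ∧ 1/3 ≤ p.1 := by
    rintro _ ⟨s, t, hs, ht, hst, rfl⟩
    refine ⟨s, t, hs, ht, hst, by simp, by simp; ring, ?_⟩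
    have := mul_nonneg ht.le (sub_nonneg.2 hr)
    simpa using this
  have m5 : ∀ p ∈ otri (0,0) (1/3,0) (b1,b2), ∃ s t, 0 < s ∧ 0 < t ∧ s + t < 1 ∧ p.1 = s/3+t*b1 ∧ p.2 = t*b2 ∧ p.2 ≤ 0 := by
    rintro _ ⟨s, t, hs, ht, hst, rfl⟩
    refine ⟨s, t, hs, ht, hst, by simp; ring, by simp, ?_⟩
    have := mul_nonpos_of_nonneg_of_nonpos ht.le hb
    simpa using this
  have m6 : ∀ p ∈ otri (0,1/3) (1/3,0) (c1,c2-1/3), ∃ s t, 0 < s ∧ 0 < t ∧ s + t < 1 ∧ p.1 = s/3+t*c1 ∧ p.2 = 1/3+t*(c2-1/3) ∧ 1/3 ≤ p.2 := by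
    rintro _ ⟨s, t, hs, ht, hst, rfl⟩
    refine ⟨s, t, hs, ht, hst, by simp; ring, by simp, ?_⟩
    have := mul_nonneg ht.le (sub_nonneg.2 hc)
    simpa using this
  have u2 := vol_union (otri_convex _ _ _) (by
    intro p h1 h2
    have := m1 p h1; have := m2 p h2; linarith) (by norm_num) (by norm_num) v1 v2
  have u3 := vol_union (otri_convex _ _ _) (by
    intro p h1 h2
    obtain ⟨s, t, hs, ht, hst, e1, e2, e3⟩ := m3 p h2
    rcases h1 with h1 | h1
    · have := m1 p h1; linarith
    · have := m2 p h1; linarith) (by linarith) (by linarith) u2 v3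
  have u4 := vol_union (otri_convex _ _ _) (by
    intro p h1 h2
    obtain ⟨s, t, hs, ht, hst, e1, e2, e3⟩ := m4 p h2
    rcases h1 with (h1 | h1) | h1
    · have := m1 p h1; linarith
    · have := m2 p h1; linarith
    · obtain ⟨_, _, _, _, _, _, _, _⟩ := m3 p h1; linarith) (by linarith) (by linarith) u3 v4
  have u5 := vol_union (otri_convex _ _ _) (by
    intro p h1 h2
    obtain ⟨s, t, hs, ht, hst, e1, e2, e3⟩ := m5 p h2
    rcases h1 with ((h1 | h1) | h1) | h1
    · have := m1 p h1; linarith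
    · have := m2 p h1; linarith
    · obtain ⟨s', t', hs', ht', hst', e1', e2', e3'⟩ := m3 p h1
      exact corner_s1 (s := s'/3) (s' := s/3) (by linarith) (by linarith) ht' ht hl hb x1 y1 (by linarith) (by linarith)
    · obtain ⟨s', t', hs', ht', hst', e1', e2', e3'⟩ := m4 p h1
      exact corner_s1 (s := s'/3) (s' := (1-s-t)/3) (t := t') (t' := t) (p1 := 1/3-r1) (q1 := 1/3-b1) (p2 := r2) (q2 := b2)
        (by linarith) (by linarith) ht' ht (by linarith) hb (by linarith) y3 (by linarith) (by linarith))
      (by linarith) (by linarith) u4 v5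
  have u6 := vol_union (otri_convex _ _ _) (by
    intro p h1 h2
    obtain ⟨s, t, hs, ht, hst, e1, e2, e3⟩ := m6 p h2
    rcases h1 with (((h1 | h1) | h1) | h1) | h1
    · have := m1 p h1; linarith
    · have := m2 p h1; linarith
    · obtain ⟨s', t', hs', ht', hst', e1', e2', e3'⟩ := m3 p h1
      exact corner_s1 (s := (1-s'-t')/3) (s' := s/3) (t := t') (t' := t) (p1 := l1) (q1 := c1) (p2 := 1/3-l2) (q2 := 1/3-c2)
        (by linarith) (by linarith) ht' ht hl (by linarith) x3 (by linarith) (by linarith) (by linarith)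
    · obtain ⟨s', t', hs', ht', hst', e1', e2', e3'⟩ := m4 p h1
      exact corner_s1 (s := (1-s'-t')/3) (s' := (1-s-t)/3) (t := t') (t' := t) (p1 := 1/3-r1) (q1 := 1/3-c1) (p2 := 1/3-r2) (q2 := 1/3-c2)
        (by linarith) (by linarith) ht' ht (by linarith) (by linarith) (by linarith) (by linarith) (by linarith) (by linarith)
    · obtain ⟨s', t', hs', ht', hst', e1', e2', e3'⟩ := m5 p h1
      linarith)
      (by linarith) (by linarith) u5 v6
  refine le_trans (le_trans (ENNReal.ofReal_le_ofReal ?_) u6) (measure_mono ?_)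
  · linarith
  · simp only [Set.union_subset_iff]; tauto

lemma rect {K : Set (ℝ × ℝ)} (hK : Convex ℝ K) (h00 : ((0:ℝ),(0:ℝ)) ∈ K) (h10 : ((1/3:ℝ),(0:ℝ)) ∈ K)
    (h01 : ((0:ℝ),(1/3:ℝ)) ∈ K) (h11 : ((1/3:ℝ),(1/3:ℝ)) ∈ K) {A B C D : ℝ × ℝ} 
    (hA : A ∈ K) (hB : B ∈ K) (hC : C ∈ K) (hD : D ∈ K) :
    ENNReal.ofReal ((|B.1-A.1|+|D.2-C.2|)/6) ≤ volume K := by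
  classical
  let F : Finset (ℝ × ℝ) := {(0,0), (1/3,1/3), A, B, C, D}
  have hF : ∀ p ∈ F, p ∈ K := by
    intro p hp
    simp only [F, Finset.mem_insert, Finset.mem_singleton] at hp
    rcases hp with rfl | rfl | rfl | rfl | rfl | rfl <;> assumption
  have ne : F.Nonempty := ⟨(0,0), by simp [F]⟩
  obtain ⟨l, hl, hl'⟩ := F.exists_min_image Prod.fst ne
  obtain ⟨r, hr, hr'⟩ := F.exists_max_image Prod.fst ne
  obtain ⟨b, hb, hb'⟩ := F.exists_min_image Prod.snd ne
  obtain ⟨c, hc, hc'⟩ := F.exists_max_image Prod.snd ne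
  have f0 : (0,0) ∈ F := by simp [F]
  have f1 : (1/3,1/3) ∈ F := by simp [F]
  have fA : A ∈ F := by simp [F]
  have fB : B ∈ F := by simp [F]
  have fC : C ∈ F := by simp [F]
  have fD : D ∈ F := by simp [F]
  refine le_trans (ENNReal.ofReal_le_ofReal ?_) (rect_aux hK h00 h10 h01 h11 (hF _ hl) (hF _ hr) (hF _ hb) (hF _ hc)
    (hl' _ f0) (hr' _ f1) (hb' _ f0) (hc' _ f1) (hl' _ hb) (hr' _ hb) (hl' _ hc) (hr' _ hc)
    (hb' _ hl) (hc' _ hl) (hb' _ hr) (hc' _ hr))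
  have := hl' _ fA; have := hl' _ fB; have := hr' _ fA; have := hr' _ fB
  have := hb' _ fC; have := hb' _ fD; have := hc' _ fC; have := hc' _ fD
  have : |B.1-A.1| ≤ r.1-l.1 := by rw [abs_le]; constructor <;> linarith
  have : |D.2-C.2| ≤ c.2-b.2 := by rw [abs_le]; constructor <;> linarith
  linarith

lemma plane {K : Set (ℝ × ℝ)} (hK : Convex ℝ K) (h00 : ((0:ℝ),(0:ℝ)) ∈ K) (h10 : ((1/3:ℝ),(0:ℝ)) ∈ K)
    (h01 : ((0:ℝ),(1/3:ℝ)) ∈ K) (h11 : ((1/3:ℝ),(1/3:ℝ)) ∈ K) {A B P Q R : ℝ × ℝ}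
    (hA : A ∈ K) (hB : B ∈ K) (hP : P ∈ K) (hQ : Q ∈ K) (hR : R ∈ K)
    (dAB : (B.1-A.1)^2+(B.2-A.2)^2 = 1) (dPQ : (Q.1-P.1)^2+(Q.2-P.2)^2 = 1/4)
    (dQR : (R.1-Q.1)^2+(R.2-Q.2)^2 = 1/4) (dRP : (P.1-R.1)^2+(P.2-R.2)^2 = 1/4) :
    ENNReal.ofReal 0.227498 ≤ volume K := by
  by_contra! hlt
  have conv : ∀ {X : ℝ}, ENNReal.ofReal X ≤ volume K → X < 0.227498 := by
    intro X hX
    have := hX.trans_lt hlt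
    exact (ENNReal.ofReal_lt_ofReal_iff (by norm_num)).1 this
  have h6 := conv (rect hK h00 h10 h01 h11 hA hB hA hB)
  have q : ∀ {P Q : ℝ × ℝ}, P ∈ K → Q ∈ K →
      |(B.1-A.1)*(2*(Q.2-P.2)) - (B.2-A.2)*(2*(Q.1-P.1))| < 4*0.227498 := by
    intro P Q hP hQ
    have := conv (quad hK hA hB hP hQ)
    have e : (B.1-A.1)*(2*(Q.2-P.2)) - (B.2-A.2)*(2*(Q.1-P.1)) =
      2 * ((B.1-A.1)*(Q.2-P.2) - (B.2-A.2)*(Q.1-P.1)) := by ring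
    rw [e, abs_mul, abs_two]; linarith
  have l : ∀ {P Q : ℝ × ℝ}, P ∈ K → Q ∈ K → |B.1-A.1| + |2*(Q.2-P.2)|/2 < 6*0.227498 := by
    intro P Q hP hQ
    have := conv (rect hK h00 h10 h01 h11 hA hB hP hQ)
    rw [abs_mul, abs_two]; linarith
  have m : ∀ {P Q : ℝ × ℝ}, P ∈ K → Q ∈ K → |B.2-A.2| + |2*(Q.1-P.1)|/2 < 6*0.227498 := by
    intro P Q hP hQ
    have := conv (rect hK h00 h10 h01 h11 hP hQ hA hB)
    rw [abs_mul, abs_two]; linarith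
  exact core' dAB (by linarith) (by linarith) (by linarith) (by linarith) (by ring) (by ring)
    (q hP hQ) (q hQ hR) (q hR hP) (l hP hQ) (l hQ hR) (l hR hP) (m hP hQ) (m hQ hR) (m hR hP)

lemma curve {E : Type*} [NormedAddCommGroup E] [NormedSpace ℝ E] {a b c : ℝ → ℝ} (ha : Monotone a) (hb : Monotone b) (hc : Monotone c)
    (habc : ∀ t, a t + b t + c t = t) {u v w : E} (hu : ‖u‖ ≤ 1) (hv : ‖v‖ ≤ 1) (hw : ‖w‖ ≤ 1) :
    ContinuousOn (fun t => a t • u + b t • v + c t • w) (Set.Icc 0 1) ∧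
    eVariationOn (fun t => a t • u + b t • v + c t • w) (Set.Icc 0 1) ≤ 1 := by
  have hle : ∀ s t : ℝ, s ≤ t → ‖(a t • u + b t • v + c t • w) - (a s • u + b s • v + c s • w)‖ ≤ t - s := by
    intro s t hst
    have e : (a t • u + b t • v + c t • w) - (a s • u + b s • v + c s • w) =
      (a t - a s) • u + (b t - b s) • v + (c t - c s) • w := by module
    have one : ∀ (r : ℝ) (x : E), 0 ≤ r → ‖x‖ ≤ 1 → ‖r • x‖ ≤ r := by
      intro r x hr hx
      rw [norm_smul, Real.norm_of_nonneg hr]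
      exact mul_le_of_le_one_right hr hx
    rw [e]
    have h1 := one _ _ (sub_nonneg.2 (ha hst)) hu
    have h2 := one _ _ (sub_nonneg.2 (hb hst)) hv
    have h3 := one _ _ (sub_nonneg.2 (hc hst)) hw
    have := norm_add₃_le (a := (a t - a s) • u) (b := (b t - b s) • v) (c := (c t - c s) • w)
    have := habc s; have := habc t
    linarith
  have lip : LipschitzWith 1 (fun t => a t • u + b t • v + c t • w) := by
    apply LipschitzWith.of_dist_le_mul
    intro s t
    rw [NNReal.coe_one, one_mul, dist_eq_norm, Real.dist_eq]
    rcases le_total s t with h | h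
    · rw [norm_sub_rev, abs_sub_comm]
      exact (hle s t h).trans (le_abs_self _)
    · exact (hle t s h).trans (le_abs_self _)
  refine ⟨lip.continuous.continuousOn, ?_⟩
  have h := (lip.lipschitzOnWith (s := Set.univ)).comp_eVariationOn_le (f := fun t => a t • u + b t • v + c t • w) (g := id) (s := Set.Icc (0:ℝ) 1) (Set.mapsTo_univ _ _)
  have h2 := (monotone_id.monotoneOn (Set.Icc (0:ℝ) 1)).eVariationOn_le (a := 0) (b := 1) (by simp) (by simp)
  simp only [Set.inter_self] at h2
  refine h.trans ?_
  rw [ENNReal.coe_one, one_mul]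
  refine h2.trans ?_
  simp

lemma pt_dist (x y x' y' : ℝ) : dist (pt x y) (pt x' y') ^ 2 = (x-x')^2+(y-y')^2 := by
  rw [EuclideanSpace.dist_eq, Real.sq_sqrt (by positivity)]
  simp [pt, Real.dist_eq, sq_abs]

lemma pt_norm {x y : ℝ} (h : x^2+y^2 ≤ 1) : ‖pt x y‖ ≤ 1 := by
  rw [EuclideanSpace.norm_eq, Real.sqrt_le_one]
  simpa [pt, sq_abs] using h

lemma pt_eta (z : EuclideanSpace ℝ (Fin 2)) : pt (z 0) (z 1) = z := by
  ext i; fin_cases i <;> simp [pt]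

lemma pt_mp : MeasurePreserving (fun p : ℝ × ℝ => pt p.1 p.2) := by
  have h := (PiLp.volume_preserving_toLp (Fin 2)).comp (volume_preserving_finTwoArrow ℝ).symm
  have e : (fun p : ℝ × ℝ => pt p.1 p.2) = WithLp.toLp 2 ∘ ⇑(MeasurableEquiv.finTwoArrow (α := ℝ)).symm := by
    funext p
    ext i; fin_cases i <;> rfl
  rw [e]
  exact h

lemma pt_comb (a b c x y x' y' x'' y'' : ℝ) : a • pt x y + b • pt x' y' + c • pt x'' y'' =
    pt (a*x+b*x'+c*x'') (a*y+b*y'+c*y'') := by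
  ext i; fin_cases i <;> simp [pt]

theorem universal_cover_lower_bound (K : Set (EuclideanSpace ℝ (Fin 2)))
    (hK : Convex ℝ K)
    (hcover : ∀ f : ℝ → EuclideanSpace ℝ (Fin 2),
      ContinuousOn f (Set.Icc 0 1) → eVariationOn f (Set.Icc 0 1) ≤ 1 →
      ∃ φ : EuclideanSpace ℝ (Fin 2) ≃ᵢ EuclideanSpace ℝ (Fin 2),
        φ '' (f '' Set.Icc 0 1) ⊆ K) :
    ENNReal.ofReal 0.227498 ≤ volume K := by
  have m0 : Monotone (fun _ : ℝ => (0:ℝ)) := monotone_const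
  -- the square
  have mono_mid : ∀ p q : ℝ, Monotone (fun t : ℝ => min (max (t-p) 0) q) := by
    intro p q s t h
    exact min_le_min_right _ (max_le_max_right _ (by linarith))
  have mono_last : ∀ p : ℝ, Monotone (fun t : ℝ => max (t-p) 0) := by
    intro p s t h
    exact max_le_max_right _ (by linarith)
  have mono_first : ∀ p : ℝ, Monotone (fun t : ℝ => min t p) := by
    intro p s t h
    exact min_le_min_right _ h
  obtain ⟨cq, vq⟩ := curve (a := fun t => min t (1/3)) (b := fun t => min (max (t-1/3) 0) (1/3))
    (c := fun t => max (t-2/3) 0) (mono_first _) (mono_mid _ _) (mono_last _)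
    (by
      intro t
      rcases le_total t (1/3) with h | h
      · rw [min_eq_left h, max_eq_right (by linarith), max_eq_right (by linarith), min_eq_left (by norm_num)]; ring
      · rw [min_eq_right h, max_eq_left (by linarith)]
        rcases le_total t (2/3) with h' | h'
        · rw [min_eq_left (by linarith), max_eq_right (by linarith)]; ring
        · rw [min_eq_right (by linarith), max_eq_left (by linarith)]; ring)
    (u := pt 1 0) (v := pt 0 1) (w := pt (-1) 0) (pt_norm (by norm_num)) (pt_norm (by norm_num)) (pt_norm (by norm_num))
  obtain ⟨φ, hφ⟩ := hcover _ cq vq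
  have sq := fun t (ht : t ∈ Set.Icc (0:ℝ) 1) => hφ ⟨_, ⟨t, ht, rfl⟩, rfl⟩
  simp only [pt_comb] at sq
  have sq0 := sq 0 (by norm_num)
  have sq1 := sq (1/3) (by norm_num)
  have sq2 := sq (2/3) (by norm_num)
  have sq3 := sq 1 (by norm_num)
  -- the triangle
  have h3 : (√3)^2 = (3:ℝ) := Real.sq_sqrt (by norm_num)
  obtain ⟨ct, vt⟩ := curve (a := fun t => min t (1/2)) (b := fun t => max (t-1/2) 0)
    (c := fun _ => 0) (mono_first _) (mono_last _) m0
    (by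
      intro t
      rcases le_total t (1/2) with h | h
      · rw [min_eq_left h, max_eq_right (by linarith)]; ring
      · rw [min_eq_right h, max_eq_left (by linarith)]; ring)
    (u := pt 1 0) (v := pt (-1/2) (√3/2)) (w := pt 0 0) (pt_norm (by norm_num)) (pt_norm (by linarith)) (pt_norm (by norm_num))
  obtain ⟨τ, hτ⟩ := hcover _ ct vt
  have tr := fun t (ht : t ∈ Set.Icc (0:ℝ) 1) => hτ ⟨_, ⟨t, ht, rfl⟩, rfl⟩
  simp only [pt_comb] at tr
  have tr0 := tr 0 (by norm_num)
  have tr1 := tr (1/2) (by norm_num)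
  have tr2 := tr 1 (by norm_num)
  -- the segment
  obtain ⟨cs, vs⟩ := curve (a := fun t => t) (b := fun _ => 0)
    (c := fun _ => 0) monotone_id m0 m0 (by intro t; ring)
    (u := pt 1 0) (v := pt 0 0) (w := pt 0 0) (pt_norm (by norm_num)) (pt_norm (by norm_num)) (pt_norm (by norm_num))
  obtain ⟨ψ, hψ⟩ := hcover _ cs vs
  have sg := fun t (ht : t ∈ Set.Icc (0:ℝ) 1) => hψ ⟨_, ⟨t, ht, rfl⟩, rfl⟩
  simp only [pt_comb] at sg
  have sg0 := sg 0 (by norm_num)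
  have sg1 := sg 1 (by norm_num)
  norm_num at sq0 sq1 sq2 sq3 tr0 tr1 tr2 sg0 sg1
  -- pull back
  let K2 : Set (ℝ × ℝ) := {p | φ (pt p.1 p.2) ∈ K}
  have hφm : MeasurePreserving φ := by
    have := φ.measurePreserving_euclideanHausdorffMeasure 2
    rwa [EuclideanSpace.euclideanHausdorffMeasure_eq_volume] at this
  have hvol : volume K2 = volume K :=
    (hφm.comp pt_mp).measure_preimage (hK.nullMeasurableSet volume)
  have hK2 : Convex ℝ K2 := by
    have c1 : Convex ℝ (φ ⁻¹' K) := by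
      have := hK.affine_preimage φ.toRealAffineIsometryEquiv.toAffineEquiv.toAffineMap
      simpa using this
    intro p hp q hq a b ha hb hab
    have := c1 (x := pt p.1 p.2) hp (y := pt q.1 q.2) hq ha hb hab
    have e := pt_comb a b 0 p.1 p.2 q.1 q.2 0 0
    simp only [zero_smul, add_zero, zero_mul] at e
    rw [e] at this
    exact this
  rw [← hvol]
  have mem : ∀ z ∈ K, ((φ.symm z) 0, (φ.symm z) 1) ∈ K2 := by
    intro z hz
    change φ (pt ((φ.symm z) 0) ((φ.symm z) 1)) ∈ K
    rwa [pt_eta, φ.apply_symm_apply]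
  have hd : ∀ z z' : EuclideanSpace ℝ (Fin 2), ((φ.symm z') 0 - (φ.symm z) 0)^2 + ((φ.symm z') 1 - (φ.symm z) 1)^2 = dist z' z ^ 2 := by
    intro z z'
    rw [← φ.symm.dist_eq z' z, ← pt_dist, pt_eta, pt_eta]
  refine plane hK2 sq0 sq1 ?_ sq2 (mem _ sg0) (mem _ sg1) (mem _ tr0) (mem _ tr1) (mem _ tr2) ?_ ?_ ?_ ?_
  · exact sq3
  · rw [hd, ψ.dist_eq, pt_dist]; norm_num
  · rw [hd, τ.dist_eq, pt_dist]; norm_num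
  · rw [hd, τ.dist_eq, pt_dist]; linarith
  · rw [hd, τ.dist_eq, pt_dist]; linarith
end

section
/- If π/3 ≤ β ≤ 2π/3, then μ(x₁,y₁,α,x₂,y₂,β) ≥ max{(1/4)·sin(β − π/6), (1/4)·sin(β + π/6)}, for all real x₁, y₁, α, x₂, y₂. -/
open Real MeasureTheory

lemma pt_mp_s3 : MeasurePreserving (fun z : ℝ × ℝ => pt z.2 z.1) := by
  have h1 := (volume_preserving_finTwoArrow ℝ).symm
  have h2 := (EuclideanSpace.volume_preserving_symm_measurableEquiv_toLp (Fin 2)).symm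
  have h3 : MeasurePreserving (Prod.swap : ℝ × ℝ → ℝ × ℝ) := Measure.measurePreserving_swap
  have h := (h2.comp h1).comp h3
  exact h

lemma pt_comb_s3 (p s u v w : ℝ) :
    u • pt 0 0 + v • pt 1 0 + w • pt p s = pt (v + w * p) (w * s) := by
  ext i
  fin_cases i <;> simp [pt]

lemma cvx3 {K : Set (EuclideanSpace ℝ (Fin 2))} (hK : Convex ℝ K)
    {x y z : EuclideanSpace ℝ (Fin 2)} (hx : x ∈ K) (hy : y ∈ K) (hz : z ∈ K) {u v w : ℝ}
    (hu : 0 ≤ u) (hv : 0 ≤ v) (hw : 0 ≤ w) (h : u + v + w = 1) :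
    u • x + v • y + w • z ∈ K := by
  have := hK.sum_mem (t := Finset.univ) (w := ![u, v, w]) (z := ![x, y, z])
    (by intro i _; fin_cases i <;> simpa)
    (by simpa [Fin.sum_univ_three] using h)
    (by intro i _; fin_cases i <;> simpa)
  simpa [Fin.sum_univ_three] using this

lemma half_area (K : Set (EuclideanSpace ℝ (Fin 2))) (hK : Convex ℝ K)
    (h0 : pt 0 0 ∈ K) (h1 : pt 1 0 ∈ K) (p s : ℝ) (hs : s ≠ 0) (hP : pt p s ∈ K) :
    ENNReal.ofReal (|s| / 2) ≤ volume (K ∩ {v | 0 < s * v 1}) := by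
  set f : ℝ → ℝ := fun y => y / s * p with hf
  set g : ℝ → ℝ := fun y => y / s * p + (1 - y / s) with hg
  set I : Set ℝ := Set.Ioc (min 0 s) (max 0 s) with hI
  have hmem : ∀ y ∈ I, 0 ≤ y / s ∧ y / s ≤ 1 := by
    intro y hy
    rcases lt_or_gt_of_ne hs with h | h
    · rw [hI, min_eq_right h.le, max_eq_left h.le] at hy
      exact ⟨div_nonneg_of_nonpos hy.2 h.le, (div_le_one_of_neg h).2 hy.1.le⟩
    · rw [hI, min_eq_left h.le, max_eq_right h.le] at hy
      exact ⟨div_nonneg hy.1.le h.le, (div_le_one h).2 hy.2⟩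
  have hfc : Continuous f := by fun_prop
  have hgc : Continuous g := by fun_prop
  have hvol : volume (regionBetween f g I) = ENNReal.ofReal (|s| / 2) := by
    have e := volume_regionBetween_eq_integral (μ := volume) (s := I) (f := f) (g := g)
      (hfc.integrableOn_Ioc) (hgc.integrableOn_Ioc) measurableSet_Ioc
      (fun y hy => by have := hmem y hy; simp only [hf, hg]; linarith [this.2])
    rw [Measure.volume_eq_prod, e]
    congr 1
    have e2 : ∫ y in (min 0 s)..(max 0 s), (g - f) y = |s| / 2 := by
      have : (g - f) = fun y => 1 - y / s := by ext y; simp [hf, hg]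
      rw [this, intervalIntegral.integral_sub (by simp)
        (Continuous.intervalIntegrable (by fun_prop) _ _)]
      rw [intervalIntegral.integral_div, integral_id]
      rcases lt_or_gt_of_ne hs with h | h
      · rw [min_eq_right h.le, max_eq_left h.le, abs_of_neg h]
        simp; field_simp; ring
      · rw [min_eq_left h.le, max_eq_right h.le, abs_of_pos h]
        simp; field_simp; ring
    rw [← e2, intervalIntegral.integral_of_le min_le_max]
  have hpre : volume ((fun z : ℝ × ℝ => pt z.2 z.1) ⁻¹' (K ∩ {v | 0 < s * v 1}))
      ≤ volume (K ∩ {v | 0 < s * v 1}) := by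
    conv_rhs => rw [← pt_mp_s3.map_eq]
    exact Measure.le_map_apply pt_mp_s3.measurable.aemeasurable _
  rw [← hvol]
  have hz : volume (({0} : Set ℝ) ×ˢ (Set.univ : Set ℝ)) = 0 := by
    rw [Measure.volume_eq_prod, Measure.prod_prod]; simp
  rw [← measure_sdiff_null hz]
  refine le_trans (measure_mono ?_) hpre
  rintro ⟨y, x⟩ ⟨⟨hy, hx⟩, hn⟩
  simp only [Set.mem_prod, Set.mem_singleton_iff, Set.mem_univ, and_true] at hn
  simp only [hf, hg, Set.mem_Ioo] at hx hy
  obtain ⟨ha, hb⟩ := hmem y hy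
  have hw : 0 < y / s := lt_of_le_of_ne ha (by
    intro h; exact (div_ne_zero hn hs) h.symm)
  constructor
  · have := pt_comb_s3 p s (1 - y / s - (x - y / s * p)) (x - y / s * p) (y / s)
    have e1 : x - y / s * p + y / s * p = x := by ring
    have e2 : y / s * s = y := by field_simp
    rw [e1, e2] at this
    show pt x y ∈ K
    rw [← this]
    refine cvx3 hK h0 h1 hP ?_ ?_ ?_ ?_ <;> linarith
  · show 0 < s * (pt x y) 1
    have : (pt x y) 1 = y := by simp [pt]
    rw [this]
    have : s * y = s ^ 2 * (y / s) := by field_simp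
    rw [this]; positivity

lemma hull_area (K : Set (EuclideanSpace ℝ (Fin 2))) (hK : Convex ℝ K)
    (h0 : pt 0 0 ∈ K) (h1 : pt 1 0 ∈ K) (p s q t : ℝ)
    (hP : pt p s ∈ K) (hQ : pt q t ∈ K) (hfin : volume K ≠ ⊤) :
    (s - t) / 2 ≤ (volume K).toReal := by
  rw [← ENNReal.ofReal_le_iff_le_toReal hfin]
  rcases le_or_gt s t with hst | hst
  · rw [ENNReal.ofReal_of_nonpos (by linarith)]; exact zero_le
  rcases le_or_gt 0 t with ht | ht
  · refine le_trans ?_ ((half_area K hK h0 h1 p s (by linarith) hP).trans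
      (measure_mono Set.inter_subset_left))
    apply ENNReal.ofReal_le_ofReal
    linarith [le_abs_self s]
  have A := half_area K hK h0 h1 q t ht.ne hQ
  rcases le_or_gt s 0 with hs | hs
  · refine le_trans ?_ (A.trans (measure_mono Set.inter_subset_left))
    apply ENNReal.ofReal_le_ofReal
    linarith [neg_abs_le t]
  have B := half_area K hK h0 h1 p s hs.ne' hP
  have hm : MeasurableSet {v : EuclideanSpace ℝ (Fin 2) | 0 < s * v 1} :=
    measurableSet_lt measurable_const (by fun_prop)
  rw [← measure_inter_add_diff K hm]
  have : (s - t) / 2 = |s| / 2 + |t| / 2 := by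
    rw [abs_of_pos hs, abs_of_neg ht]; ring
  rw [this, ENNReal.ofReal_add (by positivity) (by positivity)]
  refine add_le_add B (A.trans (measure_mono ?_))
  rintro v ⟨hv, hv2⟩
  refine ⟨hv, fun hv3 => ?_⟩
  simp only [Set.mem_setOf_eq] at hv2 hv3
  have := pos_of_mul_pos_right hv3 hs.le
  nlinarith

theorem area_ge_triangle_height (x1 y1 a x2 y2 b : ℝ)
    (hb : Real.pi / 3 ≤ b) (hb' : b ≤ 2 * Real.pi / 3) :
    area x1 y1 a x2 y2 b ≥
      max (1 / 4 * Real.sin (b - Real.pi / 6)) (1 / 4 * Real.sin (b + Real.pi / 6)) := by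
  set C := config x1 y1 a x2 y2 b with hC
  have hfinC : C.Finite := by
    rw [hC, config]
    exact ((Set.toFinite _).union (Set.finite_range _)).union (Set.finite_range _)
  have hfin : volume (convexHull ℝ C) ≠ ⊤ :=
    ((isBounded_convexHull.2 hfinC.isBounded).measure_lt_top).ne
  have h0 : pt 0 0 ∈ convexHull ℝ C := subset_convexHull ℝ _ (by simp [hC, config])
  have h1 : pt 1 0 ∈ convexHull ℝ C := subset_convexHull ℝ _ (by simp [hC, config])
  have hT : ∀ k, triVertex x2 y2 b k ∈ convexHull ℝ C := fun k =>
    subset_convexHull ℝ _ (Or.inr ⟨k, rfl⟩)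
  have key := fun k => hull_area _ (convex_convexHull ℝ C) h0 h1 _ _ _ _ (hT 0) (hT k) hfin
  have k1 := key 1
  have k2 := key 2
  have s3 : √3 * √3 = 3 := Real.mul_self_sqrt (by norm_num)
  have c1 : Real.cos (2 * π / 3) = -1 / 2 := by
    rw [show 2 * π / 3 = π - π / 3 by ring, Real.cos_pi_sub, Real.cos_pi_div_three]; ring
  have d1 : Real.sin (2 * π / 3) = √3 / 2 := by
    rw [show 2 * π / 3 = π - π / 3 by ring, Real.sin_pi_sub, Real.sin_pi_div_three]
  have c2 : Real.cos (2 * (2 * π / 3)) = -1 / 2 := by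
    rw [Real.cos_two_mul, c1]; ring
  have d2 : Real.sin (2 * (2 * π / 3)) = -(√3 / 2) := by
    rw [Real.sin_two_mul, c1, d1]; ring
  simp only [Fin.val_zero, Fin.val_one, Fin.val_two, Nat.cast_zero, Nat.cast_one, Nat.cast_ofNat,
    zero_mul, one_mul, add_zero, Real.sin_add, c1, d1, c2, d2] at k1 k2
  rw [area, ge_iff_le, max_le_iff, Real.sin_sub, Real.sin_add, Real.cos_pi_div_six,
    Real.sin_pi_div_six]
  constructor
  · refine le_trans (le_of_eq ?_) k1
    linear_combination (Real.cos b / 24) * s3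
  · refine le_trans (le_of_eq ?_) k2
    linear_combination (-Real.cos b / 24) * s3
end
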